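/- arXiv:2509.04200 — 5 statements merged into one kernel-verified Lean document; each statement's English description precedes it below -/
import Mathlib

section
/- Let T^(ℵ0) be the infinitary rooted tree (the regular rooted tree in which every vertex has countably infinitely many children) on a countably infinite vertex set X. Then 𝒮(T^(ℵ0)) ≈ I_X. -/
open Set Cardinal

universe u

/-- A chart on `X` (an element of the symmetric inverse monoid `I_X`): a partial
bijection between subsets of `X`, encoded as a functional, injective relation,
i.e. a set of pairs. -/
structure Chart (X : Type u) : Type u where
  rel : Set (X × X)
  functional : ∀ ⦃x y y'⦄, (x, y) ∈ rel → (x, y') ∈ rel → y = y'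
  injective : ∀ ⦃x x' y⦄, (x, y) ∈ rel → (x', y) ∈ rel → x = x'

namespace Chart

variable {X : Type u}

/-- Composition of charts: compose wherever possible. -/
instance : Mul (Chart X) :=
  ⟨fun f g =>
    { rel := {p | ∃ y, (p.1, y) ∈ f.rel ∧ (y, p.2) ∈ g.rel}
      functional := by
        rintro x y y' ⟨z, hz1, hz2⟩ ⟨w, hw1, hw2⟩
        obtain rfl : z = w := f.functional hz1 hw1
        exact g.functional hz2 hw2
      injective := by
        rintro x x' y ⟨z, hz1, hz2⟩ ⟨w, hw1, hw2⟩
        obtain rfl : z = w := g.injective hz2 hw2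
        exact f.injective hz1 hw1 }⟩

/-- The inverse chart. -/
instance : Inv (Chart X) :=
  ⟨fun f =>
    { rel := {p | (p.2, p.1) ∈ f.rel}
      functional := fun _ _ _ h h' => f.injective h h'
      injective := fun _ _ _ h h' => f.functional h h' }⟩

/-- The domain of a chart. -/
def dom (f : Chart X) : Set X := {x | ∃ y, (x, y) ∈ f.rel}

/-- The range (image) of a chart. -/
def ran (f : Chart X) : Set X := {y | ∃ x, (x, y) ∈ f.rel}

end Chart

/-- Membership in the subsemigroup of `I_X` generated by a set of charts. -/
inductive InGen {X : Type u} (S : Set (Chart X)) : Chart X → Prop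
  | base {f : Chart X} : f ∈ S → InGen S f
  | mul {f g : Chart X} : InGen S f → InGen S g → InGen S (f * g)

/-- The subsemigroup of `I_X` generated by a set of charts. -/
def Sgen {X : Type u} (S : Set (Chart X)) : Set (Chart X) := {f | InGen S f}

/-- The Bergman–Shelah preorder `S ≼ T` on subsets of `I_X`: there is a countable
subset `U ⊆ I_X` with `S` contained in the subsemigroup generated by `T ∪ U`. -/
def BSleq {X : Type u} (S T : Set (Chart X)) : Prop :=
  ∃ U : Set (Chart X), U.Countable ∧ S ⊆ Sgen (T ∪ U)

/-- Bergman–Shelah equivalence `S ≈ T`. -/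
def BSequiv {X : Type u} (S T : Set (Chart X)) : Prop := BSleq S T ∧ BSleq T S

/-- The Bergman–Shelah preorder relative to a cardinal `κ`: `S ≼_κ T` iff there is
`U ⊆ I_X` with `|U| < κ` and `S` contained in the subsemigroup generated by `T ∪ U`. -/
def BSleqC {X : Type u} (κ : Cardinal.{u}) (S T : Set (Chart X)) : Prop :=
  ∃ U : Set (Chart X), #↥U < κ ∧ S ⊆ Sgen (T ∪ U)

/-- Bergman–Shelah equivalence relative to a cardinal `κ`. -/
def BSequivC {X : Type u} (κ : Cardinal.{u}) (S T : Set (Chart X)) : Prop :=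
  BSleqC κ S T ∧ BSleqC κ T S

/-- A chart is a permutation of `X` if it is everywhere defined and surjective. -/
def IsPermChart {X : Type u} (f : Chart X) : Prop :=
  (∀ x : X, ∃ y, (x, y) ∈ f.rel) ∧ ∀ y : X, ∃ x, (x, y) ∈ f.rel

/-- The partwise stabiliser of a family of subsets of `X`: all permutations of `X`
mapping each member of the family onto itself. -/
def PStab {X : Type u} (P : Set (Set X)) : Set (Chart X) :=
  {f | IsPermChart f ∧ ∀ B ∈ P, {y | ∃ x ∈ B, (x, y) ∈ f.rel} = B}

/-- A subset of `I_X` closed under composition. -/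
def IsSubsemigroup {X : Type u} (S : Set (Chart X)) : Prop :=
  ∀ f ∈ S, ∀ g ∈ S, f * g ∈ S

/-- A subsemigroup of `I_X` closed under inversion. -/
def IsInverseSubsemigroup {X : Type u} (S : Set (Chart X)) : Prop :=
  IsSubsemigroup S ∧ ∀ f ∈ S, f⁻¹ ∈ S

/-- The orbit of a point under a set of charts: `{x} ∪ {xf : f ∈ M, x ∈ dom f}`. -/
def ChartOrbit {X : Type u} (M : Set (Chart X)) (x : X) : Set X :=
  insert x {y | ∃ f ∈ M, (x, y) ∈ f.rel}

/-- The cone of a point under a set of charts: `{xs : s ∈ S, x ∈ dom s}`. -/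
def ChartCone {X : Type u} (S : Set (Chart X)) (x : X) : Set X :=
  {y | ∃ f ∈ S, (x, y) ∈ f.rel}

/-- The semilattice of idempotents of `I_X`: the partial identity charts. -/
def EX (X : Type u) : Set (Chart X) := {f | ∀ x y : X, (x, y) ∈ f.rel → y = x}

/-- A `κ`-uniform partition: every part has cardinality `κ`. -/
def IsUniformPartition {X : Type u} (κ : Cardinal.{u}) (P : Set (Set X)) : Prop :=
  Setoid.IsPartition P ∧ ∀ B ∈ P, #↥B = κ

/-- A `κ`-unbounded partition: all parts have cardinality `< κ` but no cardinal
`c < κ` bounds the cardinalities of all parts. -/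
def IsUnboundedPartition {X : Type u} (κ : Cardinal.{u}) (P : Set (Set X)) : Prop :=
  Setoid.IsPartition P ∧ (∀ B ∈ P, #↥B < κ) ∧ ¬∃ c < κ, ∀ B ∈ P, #↥B ≤ c

/-- A `κ`-bounded partition: some cardinal `c < κ` bounds the cardinalities of
all parts. -/
def IsBoundedPartition {X : Type u} (κ : Cardinal.{u}) (P : Set (Set X)) : Prop :=
  Setoid.IsPartition P ∧ ∃ c < κ, ∀ B ∈ P, #↥B ≤ c

/-- A rooted tree on (a subset of) `X`, encoded via its parent function: every
vertex reaches the root by finitely many applications of `par`. -/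
structure RTree (X : Type u) : Type u where
  verts : Set X
  root : X
  root_mem : root ∈ verts
  par : X → X
  par_mem : ∀ x ∈ verts, par x ∈ verts
  par_root : par root = root
  par_reaches : ∀ x ∈ verts, ∃ n : ℕ, par^[n] x = root

namespace RTree

variable {X : Type u}

/-- `T.anc x y` : `x` is an ancestor of `y` (or `x = y`), i.e. `x` lies on the
rooted path to `y`. -/
def anc (T : RTree X) (x y : X) : Prop := ∃ n : ℕ, T.par^[n] y = x

/-- The level of a vertex: its distance to the root. -/
noncomputable def level (T : RTree X) (x : X) : ℕ := sInf {n : ℕ | T.par^[n] x = T.root}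

/-- The children of a vertex. -/
def children (T : RTree X) (x : X) : Set X :=
  {y | y ∈ T.verts ∧ T.par y = x ∧ y ≠ x}

/-- The neighbours of a vertex in the tree (its children together with its
parent, if the vertex is not the root); the degree of the vertex is the size
of this set. -/
def nbhd (T : RTree X) (x : X) : Set X :=
  {y | y ∈ T.verts ∧ ((T.par y = x ∧ y ≠ x) ∨ (T.par x = y ∧ x ≠ y))}

/-- `P` is the vertex set of a (finite or infinite) path of `T` starting at the
root: a nonempty set of vertices closed under taking parents and linearly
ordered by ancestry. -/
def IsRootedPath (T : RTree X) (P : Set X) : Prop :=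
  P.Nonempty ∧ P ⊆ T.verts ∧ (∀ x ∈ P, T.par x ∈ P) ∧
    ∀ x ∈ P, ∀ y ∈ P, T.anc x y ∨ T.anc y x

end RTree

/-- `T'` is a subtree of `T`: a rooted tree on a subset of the vertices of `T`,
with the same root and the same parent relation. -/
def IsSubtree {X : Type u} (T' T : RTree X) : Prop :=
  T'.verts ⊆ T.verts ∧ T'.root = T.root ∧ ∀ x ∈ T'.verts, T'.par x = T.par x

/-- `Q` is a quasi-subtree of `T`: a rooted tree on a subset of the vertices of
`T` preserving the ancestry relation and the levels of `T`. -/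
def IsQuasiSubtree {X : Type u} (Q T : RTree X) : Prop :=
  Q.verts ⊆ T.verts ∧
    (∀ x ∈ Q.verts, ∀ y ∈ Q.verts, (Q.anc x y ↔ T.anc x y)) ∧
    ∀ x ∈ Q.verts, ∀ y ∈ Q.verts, (Q.level x = Q.level y ↔ T.level x = T.level y)

/-- Isomorphism of rooted trees: a bijection of the vertex sets mapping root to
root and commuting with the parent functions. -/
def RTreeIso {X : Type u} {Y : Type u} (T : RTree X) (R : RTree Y) : Prop :=
  ∃ φ : X → Y, Set.BijOn φ T.verts R.verts ∧ φ T.root = R.root ∧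
    ∀ x ∈ T.verts, φ (T.par x) = R.par (φ x)

/-- The semigroup `𝒮(T)` of path-bijections of a rooted tree `T`: charts whose
domain and range are vertex sets of rooted paths and which preserve levels. -/
def pathSg {X : Type u} (T : RTree X) : Set (Chart X) :=
  {f | (∃ P, T.IsRootedPath P ∧ Chart.dom f = P) ∧
    (∃ Q, T.IsRootedPath Q ∧ Chart.ran f = Q) ∧
    ∀ x y : X, (x, y) ∈ f.rel → T.level y = T.level x}

namespace TreeProof

section Tree
variable {X : Type u} (T : RTree X) (c : X → List ℕ → X)

/-- The `n`-th vertex of the branch coded by `w`. -/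
def P (w : ℕ → List ℕ) : ℕ → X
  | 0 => T.root
  | n + 1 => c (P w n) (w n)

variable (hp : ∀ x l, T.par (c x l) = x) (hn : ∀ x l, c x l ≠ x)
  (hi : ∀ x, Function.Injective (c x))

theorem par_P
    (hp : ∀ x l, T.par (c x l) = x)
    (w : ℕ → List ℕ) (n : ℕ) : T.par (P T c w (n + 1)) = P T c w n := hp _ _

theorem P_ne_root
    (hp : ∀ x l, T.par (c x l) = x) (hn : ∀ x l, c x l ≠ x)
    (w : ℕ → List ℕ) (n : ℕ) : P T c w (n + 1) ≠ T.root := by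
  intro h
  have h1 := par_P T c hp w n
  rw [h, T.par_root] at h1
  have h2 : P T c w (n + 1) ≠ P T c w n := hn _ _
  exact h2 (h.trans h1)

theorem iter_P
    (hp : ∀ x l, T.par (c x l) = x)
    (w : ℕ → List ℕ) (m n : ℕ) : T.par^[m] (P T c w (n + m)) = P T c w n := by
  induction m with
  | zero => rfl
  | succ m ih =>
    rw [Function.iterate_succ_apply, ← Nat.add_assoc, par_P T c hp, ih]

theorem level_P
    (hp : ∀ x l, T.par (c x l) = x) (hn : ∀ x l, c x l ≠ x)
    (w : ℕ → List ℕ) (n : ℕ) : T.level (P T c w n) = n := by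
  unfold RTree.level
  apply le_antisymm
  · apply Nat.sInf_le
    have := iter_P T c hp w n 0
    rw [Nat.zero_add] at this
    exact this
  · apply le_csInf
    · refine ⟨n, ?_⟩
      have := iter_P T c hp w n 0
      rw [Nat.zero_add] at this
      exact this
    · intro m hm
      by_contra hlt
      push Not at hlt
      obtain ⟨k, rfl⟩ : ∃ k, n = (k + 1) + m := ⟨n - m - 1, by omega⟩
      rw [Set.mem_ofPred_eq, iter_P T c hp] at hm
      exact P_ne_root T c hp hn w k hm

theorem P_idx
    (hp : ∀ x l, T.par (c x l) = x) (hn : ∀ x l, c x l ≠ x)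
    {w w' : ℕ → List ℕ} {n m : ℕ} (h : P T c w n = P T c w' m) : n = m := by
  rw [← level_P T c hp hn w n, h, level_P T c hp hn]

theorem P_letter
    (hp : ∀ x l, T.par (c x l) = x) (hi : ∀ x, Function.Injective (c x))
    {w w' : ℕ → List ℕ} {n : ℕ} (h : P T c w (n + 1) = P T c w' (n + 1)) :
    w n = w' n := by
  have h1 : P T c w n = P T c w' n := by
    rw [← par_P T c hp w n, h, par_P T c hp]
  have h2 : c (P T c w n) (w n) = c (P T c w' n) (w' n) := h
  rw [h1] at h2
  exact hi _ h2

theorem P_congr {w w' : ℕ → List ℕ} {n : ℕ} (h : ∀ k < n, w k = w' k) :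
    P T c w n = P T c w' n := by
  induction n with
  | zero => rfl
  | succ n ih =>
    show c _ _ = c _ _
    rw [ih (fun k hk => h k (by omega)), h n (by omega)]

theorem P_path
    (hp : ∀ x l, T.par (c x l) = x)
    (hT : T.verts = Set.univ) (w : ℕ → List ℕ) :
    T.IsRootedPath (Set.range (P T c w)) := by
  refine ⟨⟨_, 0, rfl⟩, by rw [hT]; exact Set.subset_univ _, ?_, ?_⟩
  · rintro _ ⟨n, rfl⟩
    cases n with
    | zero => exact ⟨0, T.par_root.symm⟩
    | succ n => exact ⟨n, (par_P T c hp w n).symm⟩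
  · have key : ∀ n m, n ≤ m → T.anc (P T c w n) (P T c w m) := by
      intro n m h
      refine ⟨m - n, ?_⟩
      have := iter_P T c hp w (m - n) n
      rwa [Nat.add_sub_cancel' h] at this
    rintro _ ⟨n, rfl⟩ _ ⟨m, rfl⟩
    rcases le_total n m with h | h
    · exact Or.inl (key _ _ h)
    · exact Or.inr (key _ _ h)

/-- The path bijection between two branches. -/
def phi (w w' : ℕ → List ℕ) : Chart X where
  rel := {p | ∃ n, p.1 = P T c w n ∧ p.2 = P T c w' n}
  functional := by
    rintro x y y' ⟨n, h1, h2⟩ ⟨m, h3, h4⟩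
    dsimp only at *
    have : n = m := P_idx T c hp hn (h1.symm.trans h3)
    rw [h2, h4, this]
  injective := by
    rintro x x' y ⟨n, h1, h2⟩ ⟨m, h3, h4⟩
    dsimp only at *
    have : n = m := P_idx T c hp hn (h2.symm.trans h4)
    rw [h1, h3, this]

theorem phi_mem (hT : T.verts = Set.univ) (w w' : ℕ → List ℕ) :
    phi T c hp hn w w' ∈ pathSg T := by
  refine ⟨⟨_, P_path T c hp hT w, ?_⟩, ⟨_, P_path T c hp hT w', ?_⟩, ?_⟩
  · ext x
    constructor
    · rintro ⟨y, n, h1, h2⟩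
      exact ⟨n, h1.symm⟩
    · rintro ⟨n, rfl⟩
      exact ⟨_, n, rfl, rfl⟩
  · ext x
    constructor
    · rintro ⟨y, n, h1, h2⟩
      exact ⟨n, h2.symm⟩
    · rintro ⟨n, rfl⟩
      exact ⟨_, n, rfl, rfl⟩
  · rintro x y ⟨n, h1, h2⟩
    dsimp only at h1 h2
    rw [h1, h2, level_P T c hp hn, level_P T c hp hn]

/-- `N` bounds an invariant initial segment for `s` containing `n`. -/
def Good (s : ℕ → ℕ) (n N : ℕ) : Prop := n < N ∧ ∀ k < N, s k < N

/-- Finite-block involutions. -/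
def FB (s : ℕ → ℕ) : Prop := (∀ n, s (s n) = n) ∧ ∀ n, ∃ N, Good s n N

noncomputable def NN (s : ℕ → ℕ) (n : ℕ) : ℕ := sInf {N | Good s n N}

theorem NN_good {s : ℕ → ℕ} (hs : FB s) (n : ℕ) : Good s n (NN s n) :=
  Nat.sInf_mem (s := {N | Good s n N}) (hs.2 n)

theorem NN_le {s : ℕ → ℕ} {n N : ℕ} (h : Good s n N) : NN s n ≤ N := Nat.sInf_le h

noncomputable def W (s : ℕ → ℕ) (n : ℕ) : List ℕ := (List.range (NN s n)).map s

theorem W_eq {s t : ℕ → ℕ} (hs : FB s) (ht : FB t) {n : ℕ} (h : W s n = W t n) :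
    s n = t n ∧ ∀ k < s n + 1, W s k = W t k := by
  have hN : NN s n = NN t n := by
    have := congrArg List.length h
    simpa [W] using this
  have hst : ∀ k < NN s n, s k = t k := by
    unfold W at h
    rw [← hN] at h
    intro k hk
    exact (List.map_inj_left.1 h) k (List.mem_range.2 hk)
  have gs := NN_good hs n
  have gt := NN_good ht n
  rw [← hN] at gt
  refine ⟨hst n gs.1, fun k hk => ?_⟩
  have hkN : k < NN s n := by have := gs.2 n gs.1; omega
  have l1 : NN s k ≤ NN s n := NN_le ⟨hkN, gs.2⟩
  have l2 : NN t k ≤ NN s n := NN_le ⟨hkN, gt.2⟩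
  have e : NN s k = NN t k := by
    apply le_antisymm
    · have g := NN_good ht k
      exact NN_le ⟨g.1, fun j hj => by rw [hst j (by omega)]; exact g.2 j hj⟩
    · have g := NN_good hs k
      exact NN_le ⟨g.1, fun j hj => by rw [← hst j (by omega)]; exact g.2 j hj⟩
  unfold W
  rw [← e]
  apply List.map_congr_left
  intro j hj
  exact hst j (by have := List.mem_range.1 hj; omega)

def uRel : Set (X × X) :=
  {p | ∃ s, FB s ∧ ∃ n, p.1 = P T c (W s) (n + 1) ∧ p.2 = P T c (W s) (s n + 1)}

theorem uRel_fun
    (hp : ∀ x l, T.par (c x l) = x) (hn : ∀ x l, c x l ≠ x) (hi : ∀ x, Function.Injective (c x))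
    ⦃x y y' : X⦄ (h : (x, y) ∈ uRel T c) (h' : (x, y') ∈ uRel T c) : y = y' := by
  obtain ⟨s, hs, n, h1, h2⟩ := h
  obtain ⟨t, ht, m, h3, h4⟩ := h'
  dsimp only at *
  have e := h1.symm.trans h3
  have : n = m := by have := P_idx T c hp hn e; omega
  subst this
  obtain ⟨a, b⟩ := W_eq hs ht (P_letter T c hp hi e)
  rw [h2, h4, ← a]
  exact P_congr T c b

theorem uRel_symm ⦃x y : X⦄ (h : (x, y) ∈ uRel T c) : (y, x) ∈ uRel T c := by
  obtain ⟨s, hs, n, h1, h2⟩ := h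
  exact ⟨s, hs, s n, h2, by rw [hs.1]; exact h1⟩

/-- The universal chart. -/
def uChart : Chart X where
  rel := uRel T c
  functional := uRel_fun T c hp hn hi
  injective := fun _ _ _ h h' =>
    uRel_fun T c hp hn hi (uRel_symm T c h) (uRel_symm T c h')

end Tree

/-- Every involution of `ℕ` is a product of two finite-block involutions. -/
theorem split (s : ℕ → ℕ) (hs : ∀ n, s (s n) = n) :
    ∃ s1 s2, FB s1 ∧ FB s2 ∧ ∀ n, s2 (s1 n) = s n := by
  classical
  let M : ℕ → ℕ := fun k => k + 1 + (Finset.range k).sup s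
  let K : ℕ → ℕ := fun i => M^[i] 0
  have K0 : K 0 = 0 := rfl
  have KS : ∀ i, K (i + 1) = M (K i) := fun i => Function.iterate_succ_apply' _ _ _
  have Klt : ∀ i, K i < K (i + 1) := by
    intro i; rw [KS]; show _ < _ + 1 + _; omega
  have Kmono : StrictMono K := strictMono_nat_of_lt_succ Klt
  have Ks : ∀ i n, n < K i → s n < K (i + 1) := by
    intro i n h
    rw [KS]
    have : s n ≤ (Finset.range (K i)).sup s := Finset.le_sup (Finset.mem_range.2 h)
    show _ < _ + 1 + _
    omega
  have ex : ∀ n, ∃ i, n < K (i + 1) := fun n => ⟨n, by have := Kmono.le_apply (x := n + 1); omega⟩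
  let b : ℕ → ℕ := fun n => Nat.find (ex n)
  have hb1 : ∀ n, n < K (b n + 1) := fun n => Nat.find_spec (ex n)
  have hb : ∀ n i, n < K i ↔ b n < i := by
    intro n i
    constructor
    · intro h
      cases i with
      | zero => rw [K0] at h; omega
      | succ i => have : b n ≤ i := Nat.find_min' (ex n) h
                  omega
    · intro h
      exact lt_of_lt_of_le (hb1 n) (Kmono.monotone h)
  have adj : ∀ n, b (s n) ≤ b n + 1 := by
    intro n
    have := (hb _ _).1 (Ks _ _ (hb1 n))
    omega
  have Kid : ∀ n, n ≤ K n := fun n => Kmono.le_apply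
  refine ⟨fun n => if b n / 2 = b (s n) / 2 then s n else n,
    fun n => if b n / 2 = b (s n) / 2 then n else s n, ⟨?_, ?_⟩, ⟨?_, ?_⟩, ?_⟩
  · intro n
    by_cases h : b n / 2 = b (s n) / 2
    · simp [h, hs]
    · simp [h]
  · intro n
    refine ⟨K (2 * (n + 1)), ?_, ?_⟩
    · have := Kid (2 * (n + 1)); omega
    · intro k hk
      rw [hb] at hk
      dsimp only
      rw [hb]
      split_ifs with h <;> omega
  · intro n
    by_cases h : b n / 2 = b (s n) / 2
    · simp [h]
    · have h' : ¬ b (s n) / 2 = b n / 2 := fun e => h e.symm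
      simp [h, h', hs]
  · intro n
    refine ⟨K (2 * (n + 1) + 1), ?_, ?_⟩
    · have := Kid (2 * (n + 1) + 1); omega
    · intro k hk
      rw [hb] at hk
      dsimp only
      rw [hb]
      have := adj k
      split_ifs with h <;> omega
  · intro n
    by_cases h : b n / 2 = b (s n) / 2
    · simp [h, hs]
    · simp [h]

/-- The involution associated with a chart. -/
theorem exists_inv {X : Type u} (e : X → ℕ) (he : Function.Injective e) (f : Chart X) :
    ∃ s : ℕ → ℕ, (∀ n, s (s n) = n) ∧
      ∀ x y, (x, y) ∈ f.rel ↔ s (2 * e x) = 2 * e y + 1 := by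
  classical
  let R : ℕ → ℕ → Prop := fun n m => ∃ x y, (x, y) ∈ f.rel ∧
    ((n = 2 * e x ∧ m = 2 * e y + 1) ∨ (m = 2 * e x ∧ n = 2 * e y + 1))
  have Rs : ∀ n m, R n m → R m n := by
    rintro n m ⟨x, y, h, h'⟩
    exact ⟨x, y, h, h'.symm⟩
  have Rf : ∀ n m m', R n m → R n m' → m = m' := by
    rintro n m m' ⟨x, y, h, h1⟩ ⟨x', y', h', h2⟩
    rcases h1 with ⟨a, b⟩ | ⟨a, b⟩ <;> rcases h2 with ⟨a', b'⟩ | ⟨a', b'⟩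
    · obtain rfl : x = x' := he (by omega)
      obtain rfl := f.functional h h'
      omega
    · omega
    · omega
    · obtain rfl : y = y' := he (by omega)
      obtain rfl := f.injective h h'
      omega
  let s : ℕ → ℕ := fun n => if h : ∃ m, R n m then h.choose else n
  have s1 : ∀ n m, R n m → s n = m := by
    intro n m h
    have hh : ∃ m, R n m := ⟨m, h⟩
    have : s n = hh.choose := dif_pos hh
    rw [this]
    exact Rf _ _ _ hh.choose_spec h
  have s2 : ∀ n, (¬ ∃ m, R n m) → s n = n := fun n h => dif_neg h
  refine ⟨s, fun n => ?_, fun x y => ⟨fun h => ?_, fun h => ?_⟩⟩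
  · by_cases h : ∃ m, R n m
    · obtain ⟨m, h⟩ := h
      rw [s1 n m h, s1 m n (Rs _ _ h)]
    · rw [s2 n h, s2 n h]
  · exact s1 _ _ ⟨x, y, h, Or.inl ⟨rfl, rfl⟩⟩
  · by_cases hh : ∃ m, R (2 * e x) m
    · obtain ⟨m, hm⟩ := hh
      have := s1 _ _ hm
      obtain ⟨x', y', h', h1⟩ := hm
      rcases h1 with ⟨a, b⟩ | ⟨a, b⟩
      · obtain rfl : x = x' := he (by omega)
        obtain rfl : y = y' := he (by omega)
        exact h'
      · omega
    · rw [s2 _ hh] at h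
      omega

theorem chart_ext {X : Type u} {f g : Chart X} (h : ∀ x y, (x, y) ∈ f.rel ↔ (x, y) ∈ g.rel) :
    f = g := by
  cases f; cases g
  congr
  ext ⟨x, y⟩
  exact h x y

theorem mem_mul {X : Type u} {f g : Chart X} {x z : X} :
    (x, z) ∈ (f * g).rel ↔ ∃ y, (x, y) ∈ f.rel ∧ (y, z) ∈ g.rel := Iff.rfl

section
variable {X : Type u} (T : RTree X) (c : X → List ℕ → X)
  (hp : ∀ x l, T.par (c x l) = x) (hn : ∀ x l, c x l ≠ x)
  (hi : ∀ x, Function.Injective (c x)) (e : X → ℕ) (he : Function.Injective e)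

/-- Vertices of the standard branch. -/
def Q (n : ℕ) : X := P T c (fun _ => []) n

def aChart : Chart X where
  rel := {p | p.2 = Q T c (2 * e p.1 + 1)}
  functional := fun _ _ _ h h' => Eq.trans h (Eq.symm h')
  injective := by
    intro x x' y h h'
    have := P_idx T c hp hn (Eq.trans (Eq.symm h) h')
    dsimp only at this
    exact he (by omega)

def bChart : Chart X where
  rel := {p | p.1 = Q T c (2 * e p.2 + 1 + 1)}
  functional := by
    intro x x' y h h'
    have := P_idx T c hp hn (Eq.trans (Eq.symm h) h')
    dsimp only at this
    exact he (by omega)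
  injective := fun _ _ _ h h' => Eq.trans h (Eq.symm h')

theorem phi_P {w w' : ℕ → List ℕ} {n : ℕ} {y : X} :
    (P T c w n, y) ∈ (phi T c hp hn w w').rel ↔ y = P T c w' n :=
  ⟨fun h => (phi T c hp hn w w').functional h ⟨n, rfl, rfl⟩, fun h => ⟨n, rfl, h⟩⟩

theorem u_P {s : ℕ → ℕ} (hs : FB s) {n : ℕ} {y : X} :
    (P T c (W s) (n + 1), y) ∈ (uChart T c hp hn hi).rel ↔ y = P T c (W s) (s n + 1) :=
  ⟨fun h => (uChart T c hp hn hi).functional h ⟨s, hs, n, rfl, rfl⟩,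
    fun h => ⟨s, hs, n, rfl, h⟩⟩

theorem factor (f : Chart X) : ∃ s1 s2,
    f = aChart T c hp hn e he * (phi T c hp hn (fun _ => []) (W s1) * (uChart T c hp hn hi *
      (phi T c hp hn (W s1) (W s2) * (uChart T c hp hn hi *
      (phi T c hp hn (W s2) (fun _ => []) * bChart T c hp hn e he))))) := by
  obtain ⟨s, hs, hf⟩ := exists_inv e he f
  obtain ⟨s1, s2, h1, h2, h12⟩ := split s hs
  refine ⟨s1, s2, chart_ext fun x y => ?_⟩
  have ha : ∀ z, (x, z) ∈ (aChart T c hp hn e he).rel ↔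
      z = P T c (fun _ => []) (2 * e x + 1) := fun z => Iff.rfl
  have hb : ∀ z, (z, y) ∈ (bChart T c hp hn e he).rel ↔
      z = P T c (fun _ => []) (2 * e y + 1 + 1) := fun z => Iff.rfl
  simp only [mem_mul, ha, exists_eq_left, phi_P, u_P T c hp hn hi h1, u_P T c hp hn hi h2, hb]
  rw [hf, h12]
  constructor
  · intro h; rw [h]
  · intro h
    have := P_idx T c hp hn h
    omega

end

end TreeProof

/-- for the infinitary rooted tree (every vertex has countably
infinitely many children) on a countably infinite vertex set `X`,
`𝒮(T^(ℵ₀)) ≈ I_X`. -/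
theorem stmt13 {X : Type u} [Countable X] [Infinite X] (T : RTree X)
    (hT : T.verts = Set.univ) (hchild : ∀ x : X, (T.children x).Infinite) :
    BSequiv (pathSg T) (Set.univ : Set (Chart X)) := by
  refine ⟨⟨∅, Set.countable_empty, fun f _ => InGen.base (Or.inl (Set.mem_univ f))⟩, ?_⟩
  obtain ⟨e, he⟩ := exists_injective_nat X
  let c : X → List ℕ → X := fun x l => (((hchild x).natEmbedding _) (Encodable.encode l) : X)
  have hc : ∀ x l, c x l ∈ T.children x := fun x l =>
    (((hchild x).natEmbedding _) (Encodable.encode l)).2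
  have hp : ∀ x l, T.par (c x l) = x := fun x l => (hc x l).2.1
  have hn : ∀ x l, c x l ≠ x := fun x l => (hc x l).2.2
  have hi : ∀ x, Function.Injective (c x) := fun x l l' h =>
    Encodable.encode_injective (((hchild x).natEmbedding _).injective (Subtype.ext h))
  refine ⟨{TreeProof.aChart T c hp hn e he, TreeProof.uChart T c hp hn hi,
    TreeProof.bChart T c hp hn e he}, Set.Finite.countable (by simp), fun f _ => ?_⟩
  obtain ⟨s1, s2, hf⟩ := TreeProof.factor T c hp hn hi e he f
  rw [hf]
  have hphi := fun w w' => TreeProof.phi_mem T c hp hn hT w w'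
  refine InGen.mul (InGen.base (Or.inr (by simp))) (InGen.mul (InGen.base (Or.inl (hphi _ _)))
    (InGen.mul (InGen.base (Or.inr (by simp))) (InGen.mul (InGen.base (Or.inl (hphi _ _)))
    (InGen.mul (InGen.base (Or.inr (by simp))) (InGen.mul (InGen.base (Or.inl (hphi _ _)))
    (InGen.base (Or.inr (by simp))))))))
end

section
/- Let T^(2) be the binary rooted tree (the regular rooted tree in which every vertex has exactly 2 children) on a countably infinite vertex set X. Then 𝒮(T^(2)) ≈ PStab(𝒫_ω). -/
open Set Cardinal

universe u

namespace Chart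

variable {X : Type u}

theorem mem_mul {f g : Chart X} {x z : X} :
    (x, z) ∈ (f * g).rel ↔ ∃ y, (x, y) ∈ f.rel ∧ (y, z) ∈ g.rel := Iff.rfl

theorem mem_inv {f : Chart X} {x y : X} : (x, y) ∈ (f⁻¹).rel ↔ (y, x) ∈ f.rel := Iff.rfl

theorem eq_of_rel {f g : Chart X} (h : f.rel = g.rel) : f = g := by
  cases f; cases g; simp_all

/-- A chart containing another one with at least the same domain equals it. -/
theorem eq_of_sub {f g : Chart X} (h : ∀ x y, (x, y) ∈ f.rel → (x, y) ∈ g.rel)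
    (h' : ∀ x z, (x, z) ∈ g.rel → ∃ y, (x, y) ∈ f.rel) : f = g := by
  apply eq_of_rel
  ext ⟨x, z⟩
  refine ⟨h x z, fun hz => ?_⟩
  obtain ⟨y, hy⟩ := h' x z hz
  rwa [g.functional hz (h x y hy)]

/-- The graph of an injective function. -/
def ofInj (φ : X → X) (hφ : Function.Injective φ) : Chart X where
  rel := {p | p.2 = φ p.1}
  functional := by
    intro x y y' h h'
    simp only [mem_ofPred_eq] at h h'
    rw [h, h']
  injective := by
    intro x x' y h h'
    simp only [mem_ofPred_eq] at h h'
    exact hφ (h.symm.trans h')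

theorem mem_ofInj {φ : X → X} {hφ : Function.Injective φ} {x y : X} :
    (x, y) ∈ (ofInj φ hφ).rel ↔ y = φ x := Iff.rfl

/-- Partial identity on a set. -/
def pid (S : Set X) : Chart X where
  rel := {p | p.1 ∈ S ∧ p.2 = p.1}
  functional := by
    intro x y y' h h'
    simp only [mem_ofPred_eq] at h h'
    rw [h.2, h'.2]
  injective := by
    intro x x' y h h'
    simp only [mem_ofPred_eq] at h h'
    exact h.2.symm.trans h'.2

theorem mem_pid {S : Set X} {x y : X} : (x, y) ∈ (pid S).rel ↔ x ∈ S ∧ y = x := Iff.rfl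

end Chart

section levels

variable {X : Type u} {T : RTree X}

theorem iter_root (n : ℕ) : T.par^[n] T.root = T.root := Function.iterate_fixed T.par_root n

theorem iter_level (hT : T.verts = Set.univ) (x : X) : T.par^[T.level x] x = T.root := by
  have := T.par_reaches x (by rw [hT]; trivial)
  exact Nat.sInf_mem (s := {n : ℕ | T.par^[n] x = T.root}) this

theorem level_le {x : X} {n : ℕ} (h : T.par^[n] x = T.root) : T.level x ≤ n :=
  Nat.sInf_le (s := {n : ℕ | T.par^[n] x = T.root}) h

theorem level_zero (hT : T.verts = Set.univ) {x : X} (h : T.level x = 0) : x = T.root := by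
  have := iter_level hT x
  rwa [h] at this

theorem level_root : T.level T.root = 0 := Nat.le_zero.1 (level_le (n := 0) rfl)

theorem level_par (hT : T.verts = Set.univ) {x : X} {k : ℕ} (h : T.level x = k + 1) :
    T.level (T.par x) = k := by
  apply le_antisymm
  · apply level_le
    rw [← Function.iterate_succ_apply, Nat.succ_eq_add_one, ← h]
    exact iter_level hT x
  · have h1 := iter_level hT (T.par x)
    rw [← Function.iterate_succ_apply] at h1
    have := level_le h1
    omega

theorem anc_level (hT : T.verts = Set.univ) {x y : X} (h : T.anc x y)
    (hl : T.level x = T.level y) : x = y := by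
  obtain ⟨n, hn⟩ := h
  rcases Nat.eq_zero_or_pos (T.level y) with h0 | h0
  · rw [level_zero hT h0, level_zero hT (hl.trans h0)]
  rcases Nat.eq_zero_or_pos n with rfl | hpos
  · exact hn.symm
  exfalso
  have h1 : T.par^[T.level y - n] x = T.root := by
    rw [← hn, ← Function.iterate_add_apply]
    rcases le_total n (T.level y) with h | h
    · rw [Nat.sub_add_cancel h]; exact iter_level hT y
    · rw [Nat.sub_eq_zero_of_le h, Nat.zero_add, ← Nat.sub_add_cancel h,
        Function.iterate_add_apply, iter_level hT, iter_root]
  have := level_le h1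
  omega

theorem path_level (hT : T.verts = Set.univ) {P : Set X} (hP : T.IsRootedPath P) {x y : X}
    (hx : x ∈ P) (hy : y ∈ P) (hl : T.level x = T.level y) : x = y := by
  rcases hP.2.2.2 x hx y hy with h | h
  · exact anc_level hT h hl
  · exact (anc_level hT h hl.symm).symm

theorem finite_level (hT : T.verts = Set.univ)
    (hchild : ∀ x : X, ∃ a b : X, a ≠ b ∧ T.children x = {a, b}) (n : ℕ) :
    {x | T.level x = n}.Finite := by
  induction n with
  | zero =>
    apply (Set.finite_singleton T.root).subset
    intro x hx
    exact level_zero hT hx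
  | succ n ih =>
    apply (ih.biUnion (t := fun x => T.children x) ?_).subset
    · intro x hx
      simp only [mem_iUnion]
      refine ⟨T.par x, level_par hT hx, by rw [hT]; trivial, rfl, ?_⟩
      intro h
      have := level_par hT hx
      rw [← h, hx] at this
      omega
    · intro x _
      obtain ⟨a, b, _, h⟩ := hchild x
      rw [h]
      exact Set.toFinite _

end levels

section swaps

variable {X : Type u}

open Classical in
/-- Simultaneous transposition of `a n` and `b n` in each `B n`. -/
noncomputable def swp (B : ℕ → Set X) (a b : ℕ → X) (x : X) : X :=
  if h : ∃ n, x ∈ B n then Equiv.swap (a h.choose) (b h.choose) x else x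

open Classical in
theorem swp_of_mem {B : ℕ → Set X} (hB : ∀ m n x, x ∈ B m → x ∈ B n → m = n) {a b : ℕ → X}
    {n : ℕ} {x : X} (hx : x ∈ B n) : swp B a b x = Equiv.swap (a n) (b n) x := by
  have h : ∃ n, x ∈ B n := ⟨n, hx⟩
  rw [swp, dif_pos h, hB _ _ _ h.choose_spec hx]

theorem swp_mem {B : ℕ → Set X} (hB : ∀ m n x, x ∈ B m → x ∈ B n → m = n) {a b : ℕ → X}
    (ha : ∀ n, a n ∈ B n) (hb : ∀ n, b n ∈ B n)
    {n : ℕ} {x : X} (hx : x ∈ B n) : swp B a b x ∈ B n := by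
  classical
  rw [swp_of_mem hB hx, Equiv.swap_apply_def]
  split_ifs
  · exact hb n
  · exact ha n
  · exact hx

theorem swp_invol {B : ℕ → Set X} (hB : ∀ m n x, x ∈ B m → x ∈ B n → m = n) {a b : ℕ → X}
    (ha : ∀ n, a n ∈ B n) (hb : ∀ n, b n ∈ B n) : Function.Involutive (swp B a b) := by
  classical
  intro x
  by_cases h : ∃ n, x ∈ B n
  · obtain ⟨n, hn⟩ := h
    rw [swp_of_mem hB (swp_mem hB ha hb hn), swp_of_mem hB hn, Equiv.swap_apply_self]
  · have : swp B a b x = x := by rw [swp, dif_neg h]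
    rw [this, this]

theorem swp_left {B : ℕ → Set X} (hB : ∀ m n x, x ∈ B m → x ∈ B n → m = n) {a b : ℕ → X}
    (ha : ∀ n, a n ∈ B n) (n : ℕ) : swp B a b (a n) = b n := by
  classical
  rw [swp_of_mem hB (ha n), Equiv.swap_apply_left]

theorem swp_right {B : ℕ → Set X} (hB : ∀ m n x, x ∈ B m → x ∈ B n → m = n) {a b : ℕ → X}
    (hb : ∀ n, b n ∈ B n) (n : ℕ) : swp B a b (b n) = a n := by
  classical
  rw [swp_of_mem hB (hb n), Equiv.swap_apply_right]

theorem swp_PStab {Pω : Set (Set X)} (hpart : Setoid.IsPartition Pω) {B : ℕ → Set X}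
    (hBP : ∀ n, B n ∈ Pω)
    (hB : ∀ m n x, x ∈ B m → x ∈ B n → m = n) {a b : ℕ → X}
    (ha : ∀ n, a n ∈ B n) (hb : ∀ n, b n ∈ B n) :
    Chart.ofInj (swp B a b) (swp_invol hB ha hb).injective ∈ PStab Pω := by
  have inv := swp_invol hB ha hb
  refine ⟨⟨fun x => ⟨_, Chart.mem_ofInj.2 rfl⟩,
    fun y => ⟨swp B a b y, Chart.mem_ofInj.2 (inv y).symm⟩⟩, ?_⟩
  intro C hC
  have key : ∀ x ∈ C, swp B a b x ∈ C := by
    intro x hx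
    by_cases h : ∃ n, x ∈ B n
    · obtain ⟨n, hn⟩ := h
      have e : C = B n := (hpart.2 x).unique ⟨hC, hx⟩ ⟨hBP n, hn⟩
      rw [e]
      exact swp_mem hB ha hb hn
    · rwa [swp, dif_neg h]
  ext y
  constructor
  · rintro ⟨x, hx, hxy⟩
    rw [Chart.mem_ofInj] at hxy
    rw [hxy]
    exact key x hx
  · intro hy
    exact ⟨_, key y hy, Chart.mem_ofInj.2 (inv y).symm⟩

end swaps

theorem lower_cases (D : Set ℕ) (hD : ∀ k, k + 1 ∈ D → k ∈ D) :
    D ∈ insert Set.univ (range fun N : ℕ => Iio N) := by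
  by_cases h : ∃ n, n ∉ D
  · right
    classical
    have hmono : ∀ j k, k + j ∈ D → k ∈ D := by
      intro j
      induction j with
      | zero => intro k h; exact h
      | succ j ih => intro k h; exact ih k (hD _ h)
    refine ⟨Nat.find h, ?_⟩
    ext k
    simp only [mem_Iio]
    constructor
    · intro hk
      by_contra hc
      exact Nat.find_min h hk hc
    · intro hk
      by_contra hc
      apply Nat.find_spec h
      apply hmono (k - Nat.find h)
      rwa [Nat.add_sub_cancel' (not_lt.1 hc)]
  · left
    push Not at h
    ext k
    simp [h k]

theorem dir1 {X : Type u} (T : RTree X)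
    (hT : T.verts = Set.univ)
    (hchild : ∀ x : X, ∃ a b : X, a ≠ b ∧ T.children x = {a, b})
    (Pω : Set (Set X)) (hpart : Setoid.IsPartition Pω)
    (hfin : ∀ B ∈ Pω, B.Finite) (hunb : ∀ n : ℕ, ∃ B ∈ Pω, n ≤ B.ncard) :
    BSleq (pathSg T) (PStab Pω) := by
  classical
  have : Nonempty X := ⟨T.root⟩
  choose F hF1 hF2 using hunb
  let L : ℕ → Set X := fun n => {x | T.level x = n}
  have hL : ∀ n, (L n).Finite := finite_level hT hchild
  let B : ℕ → Set X := fun n => Nat.rec (F (L 0).ncard)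
    (fun n C => F ((L (n+1)).ncard + C.ncard + 1)) n
  have hB0 : B 0 = F (L 0).ncard := rfl
  have hBs : ∀ n, B (n+1) = F ((L (n+1)).ncard + (B n).ncard + 1) := fun n => rfl
  have hBP : ∀ n, B n ∈ Pω := by
    intro n
    cases n with
    | zero => exact hF1 _
    | succ n => exact hF1 _
  have hmono : StrictMono fun n => (B n).ncard := by
    apply strictMono_nat_of_lt_succ
    intro n
    have := hF2 ((L (n+1)).ncard + (B n).ncard + 1)
    rw [← hBs] at this
    omega
  have hcard : ∀ n, (L n).ncard ≤ (B n).ncard := by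
    intro n
    cases n with
    | zero => exact hF2 _
    | succ n =>
      have := hF2 ((L (n+1)).ncard + (B n).ncard + 1)
      rw [← hBs] at this
      omega
  have hB : ∀ m n x, x ∈ B m → x ∈ B n → m = n := by
    intro m n x hm hn
    have e : B m = B n := (hpart.2 x).unique ⟨hBP m, hm⟩ ⟨hBP n, hn⟩
    apply hmono.injective
    simp only [e]
  have hex : ∀ n, ∃ f : X → X, L n ⊆ f ⁻¹' (B n) ∧ InjOn f (L n) := by
    intro n
    apply (hL n).exists_injOn_of_encard_le
    rw [← (hL n).cast_ncard_eq, ← (hfin _ (hBP n)).cast_ncard_eq]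
    exact_mod_cast hcard n
  choose φ' hφ1 hφ2 using hex
  let φ : X → X := fun x => φ' (T.level x) x
  have hφB : ∀ x, φ x ∈ B (T.level x) := fun x => hφ1 (T.level x) (show x ∈ L _ from rfl)
  have hφ : Function.Injective φ := by
    intro x y h
    have e : T.level x = T.level y := hB _ _ _ (hφB x) (h ▸ hφB y)
    apply hφ2 (T.level y) (show x ∈ L _ from e) (show y ∈ L _ from rfl)
    have h' : φ' (T.level x) x = φ' (T.level y) y := h
    rwa [e] at h'
  have hne : ∀ n, (B n).Nonempty := fun n => Setoid.nonempty_of_mem_partition hpart (hBP n)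
  choose ψ hψ using hne
  let c := Chart.ofInj φ hφ
  let ε : Set ℕ → Chart X := fun D => Chart.pid (ψ '' D)
  refine ⟨{c, c⁻¹} ∪ ε '' (insert Set.univ (range fun N : ℕ => Iio N)), ?_, ?_⟩
  · apply Set.Countable.union (Set.toFinite _).countable
    exact ((countable_range _).insert _).image _
  rintro f ⟨⟨P, hP, hdom⟩, ⟨Q, hQ, hran⟩, hlev⟩
  let D : Set ℕ := {n | ∃ x ∈ P, T.level x = n}
  have hD : D ∈ insert Set.univ (range fun N : ℕ => Iio N) := by
    apply lower_cases
    rintro k ⟨x, hx, hk⟩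
    exact ⟨T.par x, hP.2.2.1 x hx, level_par hT hk⟩
  have hpq : ∀ n, ∃ x y, n ∈ D → (x, y) ∈ f.rel ∧ T.level x = n := by
    intro n
    by_cases hn : n ∈ D
    · obtain ⟨x, hx, hxn⟩ := hn
      rw [← hdom] at hx
      obtain ⟨y, hy⟩ := hx
      exact ⟨x, y, fun _ => ⟨hy, hxn⟩⟩
    · exact ⟨T.root, T.root, fun h => absurd h hn⟩
  choose p q hpq using hpq
  let a : ℕ → X := fun n => if n ∈ D then φ (p n) else ψ n
  let b : ℕ → X := fun n => if n ∈ D then φ (q n) else ψ n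
  have haD : ∀ n ∈ D, a n = φ (p n) := fun n hn => if_pos hn
  have hbD : ∀ n ∈ D, b n = φ (q n) := fun n hn => if_pos hn
  have ha : ∀ n, a n ∈ B n := by
    intro n
    by_cases hn : n ∈ D
    · rw [haD n hn]
      have := hφB (p n)
      rwa [(hpq n hn).2] at this
    · have : a n = ψ n := if_neg hn
      rw [this]; exact hψ n
  have hb : ∀ n, b n ∈ B n := by
    intro n
    by_cases hn : n ∈ D
    · rw [hbD n hn]
      have := hφB (q n)
      rwa [hlev _ _ (hpq n hn).1, (hpq n hn).2] at this
    · have : b n = ψ n := if_neg hn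
      rw [this]; exact hψ n
  let s₁ := Chart.ofInj (swp B a ψ) (swp_invol hB ha hψ).injective
  let s₂ := Chart.ofInj (swp B ψ b) (swp_invol hB hψ hb).injective
  have hs₁ : s₁ ∈ PStab Pω := swp_PStab hpart hBP hB ha hψ
  have hs₂ : s₂ ∈ PStab Pω := swp_PStab hpart hBP hB hψ hb
  have hf : f = c * (s₁ * (ε D * (s₂ * c⁻¹))) := by
    apply Chart.eq_of_sub
    · intro x y hxy
      have hx : x ∈ P := by rw [← hdom]; exact ⟨y, hxy⟩
      have hn : T.level x ∈ D := ⟨x, hx, rfl⟩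
      obtain ⟨h1, h2⟩ := hpq _ hn
      have hp : p (T.level x) = x := path_level hT hP (by rw [← hdom]; exact ⟨_, h1⟩) hx h2
      have hq : q (T.level x) = y := by
        rw [hp] at h1
        exact f.functional h1 hxy
      refine ⟨φ x, rfl, ψ (T.level x), ?_, ψ (T.level x), ⟨⟨_, hn, rfl⟩, rfl⟩, φ y, ?_, rfl⟩
      · refine Chart.mem_ofInj.2 ?_
        rw [← swp_left hB ha (b := ψ), haD _ hn, hp]
      · refine Chart.mem_ofInj.2 ?_
        rw [swp_left hB hψ (b := b), hbD _ hn, hq]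
    · rintro x z ⟨x1, h1, x2, h2, x3, ⟨⟨n, hn, h3⟩, -⟩, -⟩
      have h1' : x1 = φ x := h1
      have h2' : x2 = swp B a ψ x1 := h2
      have h3' : ψ n = x2 := h3
      refine ⟨q n, ?_⟩
      have : x = p n := by
        apply hφ
        rw [← haD n hn, ← swp_right hB hψ (a := a), h3', h2', swp_invol hB ha hψ, h1']
      rw [this]
      exact (hpq n hn).1
  rw [hf]
  refine .mul (.base ?_) (.mul (.base ?_) (.mul (.base ?_) (.mul (.base ?_) (.base ?_))))
  · right; left; left; rfl
  · left; exact hs₁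
  · right; right; exact ⟨D, hD, rfl⟩
  · left; exact hs₂
  · right; left; right; rfl

section rays

variable {X : Type u}

/-- A ray: an infinite rooted path, as a sequence. -/
structure IsRay (T : RTree X) (q : ℕ → X) : Prop where
  zero : q 0 = T.root
  par : ∀ n, T.par (q (n + 1)) = q n
  ne : ∀ n, q (n + 1) ≠ q n

theorem IsRay.iter {T : RTree X} {q : ℕ → X} (h : IsRay T q) (m n : ℕ) :
    T.par^[m] (q (n + m)) = q n := by
  induction m with
  | zero => rfl
  | succ m ih => rw [Function.iterate_succ_apply, ← Nat.add_assoc, h.par, ih]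

theorem IsRay.ne_root {T : RTree X} {q : ℕ → X} (h : IsRay T q) (n : ℕ) :
    q (n + 1) ≠ T.root := by
  intro e
  have h1 := h.par n
  rw [e, T.par_root] at h1
  exact h.ne n (e.trans h1)

theorem IsRay.level {T : RTree X} {q : ℕ → X} (h : IsRay T q)
    (hT : T.verts = Set.univ) (n : ℕ) : T.level (q n) = n := by
  apply le_antisymm
  · apply level_le
    have := h.iter n 0
    rwa [Nat.zero_add, h.zero] at this
  · by_contra hc
    push Not at hc
    have h1 := iter_level hT (q n)
    obtain ⟨k, hk⟩ : ∃ k, n = (k + 1) + T.level (q n) := ⟨n - T.level (q n) - 1, by omega⟩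
    have h2 := h.iter (T.level (q n)) (k + 1)
    rw [← hk, h1] at h2
    exact h.ne_root k h2.symm

theorem IsRay.inj {T : RTree X} {p q : ℕ → X} (hp : IsRay T p) (hq : IsRay T q)
    (hT : T.verts = Set.univ) {m n : ℕ} (h : p m = q n) : m = n := by
  rw [← hp.level hT m, h, hq.level hT]

theorem IsRay.path {T : RTree X} {q : ℕ → X} (h : IsRay T q)
    (hT : T.verts = Set.univ) : T.IsRootedPath (range q) := by
  refine ⟨⟨_, 0, rfl⟩, by rw [hT]; exact subset_univ _, ?_, ?_⟩
  · rintro _ ⟨n, rfl⟩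
    cases n with
    | zero => exact ⟨0, by rw [h.zero, T.par_root]⟩
    | succ n => exact ⟨n, (h.par n).symm⟩
  · rintro _ ⟨m, rfl⟩ _ ⟨n, rfl⟩
    rcases le_total m n with hmn | hmn
    · left
      refine ⟨n - m, ?_⟩
      have := h.iter (n - m) m
      rwa [Nat.add_sub_cancel' hmn] at this
    · right
      refine ⟨m - n, ?_⟩
      have := h.iter (m - n) n
      rwa [Nat.add_sub_cancel' hmn] at this

/-- The path bijection between two rays. -/
def rayChart {T : RTree X} {p q : ℕ → X} (hp : IsRay T p) (hq : IsRay T q)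
    (hT : T.verts = Set.univ) : Chart X where
  rel := {z | ∃ n, z.1 = p n ∧ z.2 = q n}
  functional := by
    rintro x y y' ⟨n, h1, h2⟩ ⟨m, h3, h4⟩
    simp only at h1 h2 h3 h4
    obtain rfl : n = m := hp.inj hp hT (h1.symm.trans h3)
    rw [h2, h4]
  injective := by
    rintro x y y' ⟨n, h1, h2⟩ ⟨m, h3, h4⟩
    simp only at h1 h2 h3 h4
    obtain rfl : n = m := hq.inj hq hT (h2.symm.trans h4)
    rw [h1, h3]

theorem rayChart_mem {T : RTree X} {p q : ℕ → X} (hp : IsRay T p) (hq : IsRay T q)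
    (hT : T.verts = Set.univ) : rayChart hp hq hT ∈ pathSg T := by
  refine ⟨⟨_, hp.path hT, ?_⟩, ⟨_, hq.path hT, ?_⟩, ?_⟩
  · ext x
    constructor
    · rintro ⟨y, n, h1, h2⟩
      exact ⟨n, h1.symm⟩
    · rintro ⟨n, rfl⟩
      exact ⟨q n, n, rfl, rfl⟩
  · ext x
    constructor
    · rintro ⟨y, n, h1, h2⟩
      exact ⟨n, h2.symm⟩
    · rintro ⟨n, rfl⟩
      exact ⟨p n, n, rfl, rfl⟩
  · rintro x y ⟨n, h1, h2⟩
    simp only at h1 h2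
    rw [h1, h2, hp.level hT, hq.level hT]

/-- The ray following a sequence of bits. -/
def bitRay (T : RTree X) (ch : Bool → X → X) (b : ℕ → Bool) : ℕ → X
  | 0 => T.root
  | n + 1 => ch (b n) (bitRay T ch b n)

end rays

/-- The coding of permutations by bits: levels `n x`, bit sequences `b g`. -/
theorem coding {X : Type u} [Countable X]
    (Pω : Set (Set X)) (hpart : Setoid.IsPartition Pω) (hfin : ∀ B ∈ Pω, B.Finite) :
    ∃ (n : X → ℕ) (b : (X → X) → ℕ → Bool), Function.Injective n ∧
      ∀ g g' : X → X, (∀ B ∈ Pω, ∀ x ∈ B, g x ∈ B) → (∀ B ∈ Pω, ∀ x ∈ B, g' x ∈ B) →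
      ∀ B ∈ Pω, ∀ x ∈ B, (∀ m < n x, b g m = b g' m) →
        (∀ y ∈ B, g y = g' y) ∧ ∀ y ∈ B, ∀ m < n y, b g m = b g' m := by
  classical
  obtain ⟨e, he⟩ := exists_injective_nat X
  choose A hA using fun x => (hpart.2 x).exists
  have hAeq : ∀ B ∈ Pω, ∀ x ∈ B, A x = B := fun B hB x hx =>
    (hpart.2 x).unique (hA x) ⟨hB, hx⟩
  let c : X → ℕ := fun x => sInf (e '' A x)
  have hcm : ∀ x, c x ∈ e '' A x := fun x => Nat.sInf_mem ⟨_, x, (hA x).2, rfl⟩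
  have hc : ∀ x y, c x = c y → A x = A y := by
    intro x y h
    obtain ⟨z, hz, hz'⟩ := hcm x
    obtain ⟨w, hw, hw'⟩ := hcm y
    have hzw : z = w := he (hz'.trans (h.trans hw'.symm))
    subst hzw
    rw [← hAeq _ (hA x).1 z hz, ← hAeq _ (hA y).1 z hw]
  have hM : ∀ i, ∃ M, ∀ x y, c x = i → c y = i → e x < M ∧ Nat.pair (e x) (e y) < M := by
    intro i
    by_cases h : ∃ x, c x = i
    · obtain ⟨x0, hx0⟩ := h
      have hf := hfin _ (hA x0).1
      obtain ⟨M1, hM1⟩ := (hf.image e).bddAbove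
      obtain ⟨M2, hM2⟩ := ((hf.prod hf).image fun p => Nat.pair (e p.1) (e p.2)).bddAbove
      refine ⟨M1 + M2 + 1, fun x y hx hy => ?_⟩
      have hx' : x ∈ A x0 := by rw [← hc x x0 (hx.trans hx0.symm)]; exact (hA x).2
      have hy' : y ∈ A x0 := by rw [← hc y x0 (hy.trans hx0.symm)]; exact (hA y).2
      have h1 := hM1 ⟨x, hx', rfl⟩
      have h2 := hM2 ⟨(x, y), ⟨hx', hy'⟩, rfl⟩
      simp only at h2
      constructor <;> omega
    · exact ⟨0, fun x y hx => absurd ⟨x, hx⟩ h⟩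
  choose M hM using hM
  let N : ℕ → ℕ := fun i => ∑ j ∈ Finset.range i, 2 * M j
  have hN : ∀ i, N (i + 1) = N i + 2 * M i := fun i => Finset.sum_range_succ _ _
  have hNm : Monotone N := monotone_nat_of_le_succ fun i => by rw [hN]; omega
  have hblock : ∀ i j s t, s < 2 * M i → t < 2 * M j → N i + s = N j + t → i = j := by
    intro i j s t hs ht h
    rcases lt_trichotomy i j with hij | hij | hij
    · have := hNm (Nat.succ_le_of_lt hij)
      rw [Nat.succ_eq_add_one, hN] at this
      omega
    · exact hij
    · have := hNm (Nat.succ_le_of_lt hij)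
      rw [Nat.succ_eq_add_one, hN] at this
      omega
  let n : X → ℕ := fun x => N (c x) + (M (c x) + e x)
  let b : (X → X) → ℕ → Bool := fun g m =>
    decide (∃ x, m = N (c x) + Nat.pair (e x) (e (g x)))
  have hex : ∀ x, e x < M (c x) := fun x => (hM (c x) x x rfl rfl).1
  refine ⟨n, b, ?_, ?_⟩
  · intro x y h
    have h' : N (c x) + (M (c x) + e x) = N (c y) + (M (c y) + e y) := h
    have hx := hex x
    have hy := hex y
    have hij := hblock _ _ _ _ (by omega) (by omega) h'
    rw [hij] at h'
    apply he
    omega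
  intro g g' hg hg' B hB x hx hagree
  have hcB : ∀ y ∈ B, c y = c x := by
    intro y hy
    simp only [c]
    rw [hAeq B hB y hy, hAeq B hB x hx]
  have hcg : ∀ g : X → X, (∀ B ∈ Pω, ∀ x ∈ B, g x ∈ B) → ∀ z, c (g z) = c z := by
    intro g hg z
    simp only [c]
    rw [hAeq (A z) (hA z).1 (g z) (hg _ (hA z).1 z (hA z).2)]
  have hlt : ∀ g : X → X, (∀ B ∈ Pω, ∀ x ∈ B, g x ∈ B) → ∀ z,
      Nat.pair (e z) (e (g z)) < M (c z) := fun g hg z =>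
    (hM (c z) z (g z) rfl (hcg g hg z)).2
  have hzero : ∀ g : X → X, (∀ B ∈ Pω, ∀ x ∈ B, g x ∈ B) → ∀ i s, M i ≤ s → s < 2 * M i →
      b g (N i + s) = false := by
    intro g hg i s h1 h2
    simp only [b, decide_eq_false_iff_not]
    rintro ⟨z, hz⟩
    have := hlt g hg z
    have hij := hblock _ _ _ _ h2 (by omega) hz
    subst hij
    omega
  constructor
  · intro y hy
    have h1 := hlt g hg y
    have h2 : b g (N (c y) + Nat.pair (e y) (e (g y))) = true := by
      simp only [b, decide_eq_true_eq]
      exact ⟨y, rfl⟩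
    rw [hagree _ (by simp only [n]; rw [hcB y hy] at h1 ⊢; omega)] at h2
    simp only [b, decide_eq_true_eq] at h2
    obtain ⟨z, hz⟩ := h2
    have h3 := hlt g' hg' z
    have hij := hblock _ _ _ _ (by omega) (by omega) hz
    rw [hij] at hz
    have h4 := Nat.pair_eq_pair.1 (Nat.add_left_cancel hz)
    have h5 := he h4.1
    subst h5
    exact he h4.2
  · intro y hy m hm
    by_cases hmx : m < n x
    · exact hagree m hmx
    · simp only [n] at hm hmx
      have h1 := hex y
      rw [hcB y hy] at hm h1
      obtain ⟨s, rfl⟩ : ∃ s, m = N (c x) + s := ⟨m - N (c x), by omega⟩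
      rw [hzero g hg _ s (by omega) (by omega), hzero g' hg' _ s (by omega) (by omega)]

theorem dir2 {X : Type u} [Countable X] (T : RTree X)
    (hT : T.verts = Set.univ)
    (hchild : ∀ x : X, ∃ a b : X, a ≠ b ∧ T.children x = {a, b})
    (Pω : Set (Set X)) (hpart : Setoid.IsPartition Pω)
    (hfin : ∀ B ∈ Pω, B.Finite) :
    BSleq (PStab Pω) (pathSg T) := by
  classical
  choose a1 a2 hne hch using hchild
  let ch : Bool → X → X := fun t x => if t then a1 x else a2 x
  have hchm : ∀ t x, ch t x ∈ T.children x := by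
    intro t x
    rw [hch]
    cases t <;> simp [ch]
  have hchi : ∀ t t' x, ch t x = ch t' x → t = t' := by
    intro t t' x h
    have h1 := hne x
    have h2 := (hne x).symm
    cases t <;> cases t' <;> simp_all [ch]
  have hray : ∀ b, IsRay T (bitRay T ch b) := fun b =>
    ⟨rfl, fun n => (hchm (b n) (bitRay T ch b n)).2.1,
      fun n => (hchm (b n) (bitRay T ch b n)).2.2⟩
  have hbit : ∀ b b' n, bitRay T ch b n = bitRay T ch b' n ↔ ∀ m < n, b m = b' m := by
    intro b b' n
    induction n with
    | zero => simp [bitRay]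
    | succ n ih =>
      constructor
      · intro h
        have h1 : bitRay T ch b n = bitRay T ch b' n := by
          rw [← (hray b).par, h, (hray b').par]
        have h2 : ch (b n) (bitRay T ch b n) = ch (b' n) (bitRay T ch b' n) := h
        rw [h1] at h2
        intro m hm
        rcases Nat.lt_succ_iff_lt_or_eq.1 hm with hm | rfl
        · exact ih.1 h1 m hm
        · exact hchi _ _ _ h2
      · intro h
        have h1 := ih.2 fun m hm => h m (by omega)
        change ch (b n) (bitRay T ch b n) = ch (b' n) (bitRay T ch b' n)
        rw [h1, h n (by omega)]
  obtain ⟨n, b, hn, hcode⟩ := coding Pω hpart hfin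
  let q : (X → X) → ℕ → X := fun g => bitRay T ch (b g)
  have hq : ∀ g, IsRay T (q g) := fun g => hray _
  let G : Set (X → X) := {g | Function.Injective g ∧ ∀ B ∈ Pω, ∀ x ∈ B, g x ∈ B}
  have hkey : ∀ g ∈ G, ∀ g' ∈ G, ∀ B ∈ Pω, ∀ x ∈ B, q g (n x) = q g' (n x) →
      ∀ y ∈ B, g y = g' y ∧ q g (n y) = q g' (n y) := by
    intro g hg g' hg' B hB x hx h y hy
    have := hcode g g' hg.2 hg'.2 B hB x hx ((hbit _ _ _).1 h)
    exact ⟨this.1 y hy, (hbit _ _ _).2 (this.2 y hy)⟩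
  let v : Chart X :=
    { rel := {p | ∃ g ∈ G, ∃ x, p.1 = q g (n x) ∧ p.2 = q g (n (g x))}
      functional := by
        rintro x y y' ⟨g, hg, z, h1, h2⟩ ⟨g', hg', z', h3, h4⟩
        simp only at h1 h2 h3 h4
        obtain rfl := hn ((hq g).inj (hq g') hT (h1.symm.trans h3))
        obtain ⟨B, hB, hzB⟩ := (hpart.2 z).exists
        have hk := hkey g hg g' hg' B hB z hzB (h1.symm.trans h3)
        rw [h2, h4, ← (hk z hzB).1]
        exact (hk (g z) (hg.2 B hB z hzB)).2
      injective := by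
        rintro x y y' ⟨g, hg, z, h1, h2⟩ ⟨g', hg', z', h3, h4⟩
        simp only at h1 h2 h3 h4
        have hzz := hn ((hq g).inj (hq g') hT (h2.symm.trans h4))
        obtain ⟨B, hB, hzB⟩ := (hpart.2 z).exists
        obtain ⟨B', hB', hzB'⟩ := (hpart.2 z').exists
        have hgz := hg.2 B hB z hzB
        have hgz' := hg'.2 B' hB' z' hzB'
        have hBB : B = B' := (hpart.2 (g z)).unique ⟨hB, hgz⟩ ⟨hB', by rw [hzz]; exact hgz'⟩
        subst hBB
        have h5 : q g (n (g z)) = q g' (n (g z)) := by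
          rw [← h2, h4, hzz]
        have hk := hkey g hg g' hg' B hB _ hgz h5
        have hz : z = z' := by
          apply hg'.1
          rw [← hzz, (hk z hzB).1]
        subst hz
        rw [h1, h3]
        exact (hk z hzB).2 }
  let r : ℕ → X := bitRay T ch fun _ => false
  have hr : IsRay T r := hray _
  have hrn : Function.Injective fun x => r (n x) := fun x y h => hn (hr.inj hr hT h)
  let u := Chart.ofInj _ hrn
  refine ⟨{u, u⁻¹, v}, (Set.toFinite _).countable, ?_⟩
  rintro f ⟨hperm, hstab⟩
  choose g hgf using hperm.1
  have hG : g ∈ G := by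
    refine ⟨fun x y h => f.injective (hgf x) (h ▸ hgf y), fun B hB x hx => ?_⟩
    rw [← hstab B hB]
    exact ⟨x, hx, hgf x⟩
  have hf : f = u * (rayChart hr (hq g) hT * (v * (rayChart (hq g) hr hT * u⁻¹))) := by
    apply Chart.eq_of_sub
    · intro x y hxy
      obtain rfl := f.functional (hgf x) hxy
      exact ⟨r (n x), rfl, q g (n x), ⟨n x, rfl, rfl⟩, q g (n (g x)), ⟨g, hG, x, rfl, rfl⟩,
        r (n (g x)), ⟨_, rfl, rfl⟩, rfl⟩
    · intro x z _
      exact ⟨g x, hgf x⟩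
  rw [hf]
  refine .mul (.base ?_) (.mul (.base ?_) (.mul (.base ?_) (.mul (.base ?_) (.base ?_))))
  · right; left; rfl
  · left; exact rayChart_mem _ _ _
  · right; right; right; rfl
  · left; exact rayChart_mem _ _ _
  · right; right; left; rfl

/-- for the binary rooted tree (every vertex has exactly two
children) on a countably infinite vertex set `X`, `𝒮(T^(2)) ≈ PStab 𝒫_ω`
where `𝒫_ω` is an ℵ₀-unbounded partition of `X`. -/
theorem stmt14 {X : Type u} [Countable X] [Infinite X] (T : RTree X)
    (hT : T.verts = Set.univ)
    (hchild : ∀ x : X, ∃ a b : X, a ≠ b ∧ T.children x = {a, b})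
    (Pω : Set (Set X)) (hpart : Setoid.IsPartition Pω)
    (hfin : ∀ B ∈ Pω, B.Finite) (hunb : ∀ n : ℕ, ∃ B ∈ Pω, n ≤ B.ncard) :
    BSequiv (pathSg T) (PStab Pω) := by
  exact ⟨dir1 T hT hchild Pω hpart hfin hunb, dir2 T hT hchild Pω hpart hfin⟩
end

section
/- Let T^(rec) be the recursive rooted tree on a countably infinite vertex set X. Then for every natural number n ≥ 1, level n of T^(rec) contains exactly 2^(n−1) vertices of infinite degree (i.e. vertices with infinitely many children). -/
open Set Cardinal

universe u

/-- The vertex set of the recursive rooted tree `T^(rec)`, in the convention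
where vertices are finite sequences of natural numbers (the empty sequence is
the root, and the parent of a sequence is obtained by dropping its last entry):
a list `l = (n_0, …, n_{k-1})` is a vertex iff whenever `i < j ≤ i + n_i` (with
`j` a valid index) we have `n_j = 0`. -/
def RecVerts : Set (List ℕ) :=
  {l | ∀ i j : ℕ, i < j → j < l.length → j ≤ i + l.getD i 0 → l.getD j 0 = 0}

/-- Recursive description of the vertices with infinitely many children. -/
def GoodRec : List ℕ → Prop
  | [] => True
  | a :: r => GoodRec r ∧ a ≤ r.length ∧ ∀ j < a, r.getD j 0 = 0

lemma goodRec_zero (l : List ℕ) : GoodRec (0 :: l) ↔ GoodRec l := by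
  simp [GoodRec]

lemma goodRec_succ (m : ℕ) (r : List ℕ) :
    GoodRec ((m + 1) :: 0 :: r) ↔ GoodRec (m :: r) := by
  simp only [GoodRec, List.length_cons]
  constructor
  · rintro ⟨⟨h1, -, -⟩, h2, h3⟩
    refine ⟨h1, by omega, fun j hj => ?_⟩
    have := h3 (j + 1) (by omega)
    simpa using this
  · rintro ⟨h1, h2, h3⟩
    refine ⟨⟨h1, by omega, fun j hj => by omega⟩, by omega, fun j hj => ?_⟩
    cases j with
    | zero => simp
    | succ j => simpa using h3 j (by omega)

lemma goodRec_iff (l : List ℕ) :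
    GoodRec l ↔ l ∈ RecVerts ∧ ∀ i < l.length, i + l.getD i 0 < l.length := by
  induction l with
  | nil => simp [GoodRec, RecVerts]
  | cons a r ih =>
    simp only [GoodRec, ih, RecVerts, Set.mem_setOf_eq, List.length_cons]
    constructor
    · rintro ⟨⟨h1, h2⟩, h3, h4⟩
      constructor
      · intro i j hij hj hji
        obtain ⟨j, rfl⟩ : ∃ k, j = k + 1 := ⟨j - 1, by omega⟩
        cases i with
        | zero =>
          simp only [List.getD_cons_zero, List.getD_cons_succ] at *
          exact h4 j (by omega)
        | succ i =>
          simp only [List.getD_cons_succ] at *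
          exact h1 i j (by omega) (by omega) (by omega)
      · intro i hi
        cases i with
        | zero => simp only [List.getD_cons_zero]; omega
        | succ i =>
          simp only [List.getD_cons_succ]
          have := h2 i (by omega)
          omega
    · rintro ⟨h1, h2⟩
      have h0 := h2 0 (by omega)
      simp only [List.getD_cons_zero] at h0
      refine ⟨⟨fun i j hij hj hji => ?_, fun i hi => ?_⟩, by omega, fun j hj => ?_⟩
      · have := h1 (i + 1) (j + 1) (by omega) (by omega)
        simp only [List.getD_cons_succ] at this
        exact this (by omega)
      · have := h2 (i + 1) (by omega)
        simp only [List.getD_cons_succ] at this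
        omega
      · have := h1 0 (j + 1) (by omega) (by omega)
        simp only [List.getD_cons_succ, List.getD_cons_zero] at this
        exact this (by omega)

lemma infinite_children_iff (l : List ℕ) (hl : l ∈ RecVerts) :
    {m : ℕ | l ++ [m] ∈ RecVerts}.Infinite ↔
      ∀ i < l.length, i + l.getD i 0 < l.length := by
  constructor
  · intro h i hi
    obtain ⟨m, hm, hm0⟩ := h.exists_gt 0
    by_contra hc
    have := hm i l.length hi (by simp)
    rw [List.getD_append _ _ _ _ hi, List.getD_append_right _ _ _ _ le_rfl] at this
    simp at this
    simp at hc
    omega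
  · intro h
    have : {m : ℕ | l ++ [m] ∈ RecVerts} = Set.univ := by
      refine Set.eq_univ_of_forall fun m i j hij hj hji => ?_
      simp only [List.length_append, List.length_singleton] at hj
      have hi : i < l.length := by omega
      have := h i hi
      rw [List.getD_append _ _ _ _ hi] at hji
      have hj' : j < l.length := by omega
      rw [List.getD_append _ _ _ _ hj']
      exact hl i j hij hj' hji
    rw [this]
    exact Set.infinite_univ

/-- Lengthen the first block by one. -/
def bumpRec : List ℕ → List ℕ
  | [] => []
  | a :: r => (a + 1) :: 0 :: r

lemma bumpRec_inj : Function.Injective bumpRec := by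
  intro l l' h
  cases l <;> cases l' <;> simp_all [bumpRec]

lemma goodRec_level_succ (n : ℕ) :
    {l | GoodRec l ∧ l.length = n + 2} =
      List.cons 0 '' {l | GoodRec l ∧ l.length = n + 1} ∪
        bumpRec '' {l | GoodRec l ∧ l.length = n + 1} := by
  ext l
  simp only [Set.mem_union, Set.mem_image, Set.mem_setOf_eq]
  constructor
  · rintro ⟨hg, hl⟩
    match l, hg, hl with
    | 0 :: r, hg, hl => exact Or.inl ⟨r, ⟨(goodRec_zero r).1 hg, by simpa using hl⟩, rfl⟩
    | (a + 1) :: b :: r, hg, hl =>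
      have hb : b = 0 := by simpa using hg.2.2 0 (by omega)
      subst hb
      exact Or.inr ⟨a :: r, ⟨(goodRec_succ a r).1 hg, by simpa using hl⟩, rfl⟩
  · rintro (⟨r, ⟨hg, hl⟩, rfl⟩ | ⟨r, ⟨hg, hl⟩, rfl⟩)
    · exact ⟨(goodRec_zero r).2 hg, by simp [hl]⟩
    · match r, hg, hl with
      | a :: r, hg, hl => exact ⟨(goodRec_succ a r).2 hg, by simpa [bumpRec] using hl⟩

lemma goodRec_count (n : ℕ) :
    {l | GoodRec l ∧ l.length = n + 1}.Finite ∧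
      {l | GoodRec l ∧ l.length = n + 1}.ncard = 2 ^ n := by
  induction n with
  | zero =>
    have : {l | GoodRec l ∧ l.length = 0 + 1} = {[0]} := by
      ext l
      simp only [Set.mem_setOf_eq, Set.mem_singleton_iff]
      constructor
      · rintro ⟨hg, hl⟩
        match l, hg, hl with
        | [a], hg, hl =>
          have : a ≤ 0 := hg.2.1
          simpa using this
      · rintro rfl
        simp [GoodRec]
    rw [this]
    simp
  | succ n ih =>
    obtain ⟨hf, hc⟩ := ih
    rw [goodRec_level_succ]
    refine ⟨(hf.image _).union (hf.image _), ?_⟩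
    rw [Set.ncard_union_eq _ (hf.image _) (hf.image _),
      Set.ncard_image_of_injective _ (List.cons_injective),
      Set.ncard_image_of_injective _ bumpRec_inj, hc]
    · ring
    · rw [Set.disjoint_left]
      rintro _ ⟨r, -, rfl⟩ ⟨s, -, h⟩
      cases s <;> simp [bumpRec] at h

/-- for every `n ≥ 1`, level `n` of the recursive rooted tree
`T^(rec)` contains exactly `2 ^ (n - 1)` vertices of infinite degree, i.e.
vertices with infinitely many children (one-element extensions lying in the
tree). -/
theorem stmt15 (n : ℕ) (hn : 1 ≤ n) :
    {l : List ℕ | l ∈ RecVerts ∧ l.length = n ∧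
        {m : ℕ | l ++ [m] ∈ RecVerts}.Infinite}.ncard = 2 ^ (n - 1) := by
  obtain ⟨k, rfl⟩ : ∃ k, n = k + 1 := ⟨n - 1, by omega⟩
  rw [Nat.add_sub_cancel, ← (goodRec_count k).2]
  congr 1
  ext l
  simp only [Set.mem_setOf_eq, goodRec_iff]
  constructor
  · rintro ⟨h1, h2, h3⟩
    exact ⟨⟨h1, (infinite_children_iff l h1).1 h3⟩, h2⟩
  · rintro ⟨⟨h1, h3⟩, h2⟩
    exact ⟨h1, h2, (infinite_children_iff l h1).2 h3⟩
end

section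
/- Let T be a rooted tree on a countably infinite vertex set X and let P be the set of all rooted paths of T. Then at least one of the following holds: (i) T contains a subtree in which every vertex has a descendant of infinite degree, and 𝒮(T) ≈ I_X; (ii) T contains no such subtree but contains a subtree in which every vertex has a descendant of degree at least 3, and 𝒮(T) ≈ PStab(𝒫_ω); (iii) P is countable and 𝒮(T) ≈ ∅. -/
open Set Cardinal

universe u

namespace BSP
variable {X : Type u}

theorem chart_ext {f g : Chart X} (h : ∀ x y, (x, y) ∈ f.rel ↔ (x, y) ∈ g.rel) : f = g := by
  cases f
  cases g
  congr
  ext ⟨x, y⟩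
  exact h x y

theorem mem_mul {f g : Chart X} {x z : X} :
    (x, z) ∈ (f * g).rel ↔ ∃ y, (x, y) ∈ f.rel ∧ (y, z) ∈ g.rel := Iff.rfl

theorem inGen_trans {S T : Set (Chart X)} {f : Chart X} (h : InGen S f)
    (hS : ∀ s ∈ S, InGen T s) : InGen T f := by
  induction h with
  | base h => exact hS _ h
  | mul _ _ h1 h2 => exact InGen.mul h1 h2

theorem inGen_mono {S T : Set (Chart X)} {f : Chart X} (h : InGen S f) (hS : S ⊆ T) : InGen T f :=
  inGen_trans h fun _ hs => InGen.base (hS hs)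

theorem bs_of_subset {S T : Set (Chart X)} (h : S ⊆ T) : BSleq S T :=
  ⟨∅, countable_empty, fun _ hs => InGen.base (Or.inl (h hs))⟩

theorem bs_trans {S T W : Set (Chart X)} (h1 : BSleq S T) (h2 : BSleq T W) : BSleq S W := by
  obtain ⟨U, hU, hS⟩ := h1
  obtain ⟨U', hU', hT⟩ := h2
  refine ⟨U ∪ U', hU.union hU', fun s hs => inGen_trans (hS hs) ?_⟩
  rintro t (ht | ht)
  · refine inGen_mono (hT ht) ?_
    exact union_subset_union_right _ subset_union_right
  · exact InGen.base (Or.inr (Or.inl ht))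

theorem bs_iUnion {ι : Type*} [Countable ι] {S : ι → Set (Chart X)} {T : Set (Chart X)}
    (h : ∀ i, BSleq (S i) T) : BSleq (⋃ i, S i) T := by
  choose U hU hS using h
  refine ⟨⋃ i, U i, countable_iUnion hU, ?_⟩
  intro s hs
  obtain ⟨i, hi⟩ := mem_iUnion.1 hs
  exact inGen_mono (hS i hi) (union_subset_union_right _ (subset_iUnion U i))

/-! ### Tree basics -/

section tree
variable (T : RTree X) (hT : T.verts = Set.univ)

theorem iter_level (hT : T.verts = Set.univ) (x : X) : T.par^[T.level x] x = T.root := by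
  have : T.level x ∈ {n : ℕ | T.par^[n] x = T.root} :=
    Nat.sInf_mem (T.par_reaches x (by rw [hT]; trivial))
  exact this

theorem level_le {x : X} {n : ℕ} (h : T.par^[n] x = T.root) : T.level x ≤ n :=
  Nat.sInf_le h

theorem level_root : T.level T.root = 0 :=
  Nat.le_zero.1 (level_le T (n := 0) rfl)

theorem level_eq_zero (hT : T.verts = Set.univ) {x : X} : T.level x = 0 ↔ x = T.root := by
  constructor
  · intro h
    have := iter_level T hT x
    rw [h] at this
    exact this
  · rintro rfl
    exact level_root T

theorem level_par (hT : T.verts = Set.univ) (x : X) : T.level (T.par x) = T.level x - 1 := by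
  by_cases hx : x = T.root
  · subst hx
    rw [T.par_root, level_root]
  · have h0 : T.level x ≠ 0 := fun h => hx ((level_eq_zero T hT).1 h)
    apply le_antisymm
    · apply level_le
      have := iter_level T hT x
      obtain ⟨m, hm⟩ := Nat.exists_eq_succ_of_ne_zero h0
      rw [hm] at this ⊢
      exact this
    · have : T.level x ≤ T.level (T.par x) + 1 := by
        apply level_le
        rw [Function.iterate_succ_apply]
        exact iter_level T hT _
      omega

theorem level_iter (hT : T.verts = Set.univ) (n : ℕ) (x : X) : T.level (T.par^[n] x) = T.level x - n := by
  induction n generalizing x with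
  | zero => rfl
  | succ n ih =>
    rw [Function.iterate_succ_apply, ih, level_par T hT]
    omega

theorem iter_root (n : ℕ) : T.par^[n] T.root = T.root :=
  Function.iterate_fixed T.par_root n

/-- The ancestor of `x` at level `i`. -/
noncomputable def up (x : X) (i : ℕ) : X := T.par^[T.level x - i] x

theorem level_up (hT : T.verts = Set.univ) {x : X} {i : ℕ} (h : i ≤ T.level x) : T.level (up T x i) = i := by
  rw [up, level_iter T hT]
  omega

theorem anc_up (x : X) (i : ℕ) : T.anc (up T x i) x := ⟨_, rfl⟩

theorem anc_refl (x : X) : T.anc x x := ⟨0, rfl⟩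

theorem anc_trans {x y z : X} (h1 : T.anc x y) (h2 : T.anc y z) : T.anc x z := by
  obtain ⟨n, rfl⟩ := h1
  obtain ⟨m, rfl⟩ := h2
  exact ⟨n + m, Function.iterate_add_apply _ _ _ _⟩

theorem anc_level (hT : T.verts = Set.univ) {x y : X} (h : T.anc x y) : T.level x ≤ T.level y := by
  obtain ⟨n, rfl⟩ := h
  rw [level_iter T hT]
  omega

theorem up_of_anc (hT : T.verts = Set.univ) {x y : X} (h : T.anc x y) : up T y (T.level x) = x := by
  obtain ⟨n, rfl⟩ := h
  rw [up, level_iter T hT]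
  by_cases hn : n ≤ T.level y
  · congr 1
    omega
  · have h1 : T.level y - (T.level y - n) = T.level y := by omega
    have h2 : n = (n - T.level y) + T.level y := by omega
    rw [h1]
    conv_rhs => rw [h2]
    rw [Function.iterate_add_apply, iter_level T hT, iter_root]

theorem up_eq_of_anc (hT : T.verts = Set.univ) {x y : X} (h : T.anc x y) {i : ℕ} (hi : i ≤ T.level x) :
    up T y i = up T x i := by
  have h1 := up_of_anc T hT (anc_trans T (anc_up T x i) h)
  rwa [level_up T hT hi] at h1

theorem up_self (x : X) : up T x (T.level x) = x := by
  simp [up]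

theorem anc_of_anc_of_le (hT : T.verts = Set.univ) {a b y : X} (ha : T.anc a y) (hb : T.anc b y)
    (h : T.level a ≤ T.level b) : T.anc a b := by
  rw [← up_of_anc T hT ha, up_eq_of_anc T hT hb h]
  exact anc_up T b _

theorem par_up (hT : T.verts = Set.univ) {x : X} {i : ℕ} (h : i + 1 ≤ T.level x) : T.par (up T x (i + 1)) = up T x i := by
  rw [up, up, ← Function.iterate_succ_apply' T.par]
  congr 1
  omega

theorem anc_par (x : X) : T.anc (T.par x) x := ⟨1, rfl⟩

theorem anc_root (hT : T.verts = Set.univ) (x : X) : T.anc T.root x := ⟨_, iter_level T hT x⟩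

theorem level_child (hT : T.verts = Set.univ) {x : X} (hx : T.par x ≠ x) : T.level x = T.level (T.par x) + 1 := by
  rw [level_par T hT]
  have : T.level x ≠ 0 := by
    intro h
    apply hx
    rw [(level_eq_zero T hT).1 h, T.par_root]
  omega

/-- An infinite rooted path, as a sequence. -/
def IsInf (g : ℕ → X) : Prop := ∀ i, T.level (g i) = i ∧ T.par (g (i + 1)) = g i

variable {T}

theorem IsInf.anc {g : ℕ → X} (h : IsInf T g) {i j : ℕ} (hij : i ≤ j) : T.anc (g i) (g j) := by
  induction j, hij using Nat.le_induction with
  | base => exact anc_refl T _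
  | succ j _ ih => exact anc_trans T ih ⟨1, (h j).2⟩

theorem IsInf.up (hT : T.verts = Set.univ) {g : ℕ → X} (h : IsInf T g) {i j : ℕ} (hij : i ≤ j) : up T (g j) i = g i := by
  have := up_of_anc T hT (h.anc hij)
  rwa [(h i).1] at this

theorem IsInf.inj {g : ℕ → X} (h : IsInf T g) {i j : ℕ} (hij : g i = g j) : i = j := by
  rw [← (h i).1, hij, (h j).1]

theorem IsInf.inj2 {g h : ℕ → X} (hg : IsInf T g) (hh : IsInf T h) {i j : ℕ} (hij : g i = h j) :
    i = j := by
  rw [← (hg i).1, hij, (hh j).1]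

theorem IsInf.path (hT : T.verts = Set.univ) {g : ℕ → X} (h : IsInf T g) : T.IsRootedPath (range g) := by
  refine ⟨⟨g 0, 0, rfl⟩, by simp [hT], ?_, ?_⟩
  · rintro _ ⟨i, rfl⟩
    cases i with
    | zero =>
      have : g 0 = T.root := (level_eq_zero T hT).1 (h 0).1
      exact ⟨0, by rw [this, T.par_root]⟩
    | succ i => exact ⟨i, ((h i).2).symm⟩
  · rintro _ ⟨i, rfl⟩ _ ⟨j, rfl⟩
    rcases le_total i j with hij | hij
    · exact Or.inl (h.anc hij)
    · exact Or.inr (h.anc hij)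

/-- The bijection between two infinite paths. -/
def pathChart {g h : ℕ → X} (hg : IsInf T g) (hh : IsInf T h) : Chart X where
  rel := {p | ∃ i, p = (g i, h i)}
  functional := by
    rintro x y y' ⟨i, hi⟩ ⟨j, hj⟩
    simp only [Prod.mk.injEq] at hi hj
    have := hg.inj (hi.1.symm.trans hj.1)
    subst this
    rw [hi.2, hj.2]
  injective := by
    rintro x y y' ⟨i, hi⟩ ⟨j, hj⟩
    simp only [Prod.mk.injEq] at hi hj
    have := hh.inj (hi.2.symm.trans hj.2)
    subst this
    rw [hi.1, hj.1]

theorem pathChart_mem (hT : T.verts = Set.univ) {g h : ℕ → X} (hg : IsInf T g) (hh : IsInf T h) :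
    pathChart hg hh ∈ pathSg T := by
  refine ⟨⟨range g, hg.path hT, ?_⟩, ⟨range h, hh.path hT, ?_⟩, ?_⟩
  · ext x
    constructor
    · rintro ⟨y, i, hi⟩
      exact ⟨i, (congrArg Prod.fst hi).symm⟩
    · rintro ⟨i, rfl⟩
      exact ⟨h i, i, rfl⟩
  · ext x
    constructor
    · rintro ⟨y, i, hi⟩
      exact ⟨i, (congrArg Prod.snd hi).symm⟩
    · rintro ⟨i, rfl⟩
      exact ⟨g i, i, rfl⟩
  · rintro x y ⟨i, hi⟩
    simp only [Prod.mk.injEq] at hi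
    rw [hi.1, hi.2, (hg i).1, (hh i).1]

theorem chain_anc (hT : T.verts = Set.univ) {Y : ℕ → X} (h : ∀ k, T.anc (Y k) (Y (k + 1))) {i j : ℕ} (hij : i ≤ j) :
    T.anc (Y i) (Y j) := by
  have := hT
  induction j, hij using Nat.le_induction with
  | base => exact anc_refl T _
  | succ j _ ih => exact anc_trans T ih (h j)

theorem chain_up (hT : T.verts = Set.univ) {Y : ℕ → X} (h : ∀ k, T.anc (Y k) (Y (k + 1))) (hl : ∀ k, k ≤ T.level (Y k))
    {i k : ℕ} (hi : i ≤ T.level (Y k)) : up T (Y i) i = up T (Y k) i := by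
  rcases le_total i k with hik | hik
  · exact (up_eq_of_anc T hT (chain_anc hT h hik) (hl i)).symm
  · exact up_eq_of_anc T hT (chain_anc hT h hik) hi

theorem chain_inf (hT : T.verts = Set.univ) {Y : ℕ → X} (h : ∀ k, T.anc (Y k) (Y (k + 1))) (hl : ∀ k, k ≤ T.level (Y k)) :
    IsInf T (fun i => up T (Y i) i) := by
  intro i
  refine ⟨level_up T hT (hl i), ?_⟩
  simp only
  rw [par_up T hT (hl (i + 1))]
  refine (chain_up hT h hl ?_).symm
  exact (Nat.le_succ i).trans (hl (i + 1))

/-- The abstract coding lemma. -/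
theorem bs_of_agree (hT : T.verts = Set.univ) (A : Set (Chart X)) (l : X → ℕ)
    (hl : Function.Injective l)
    (g : Chart X → ℕ → X) (hg : ∀ a ∈ A, IsInf T (g a))
    (h1 : ∀ a ∈ A, ∀ b ∈ A, ∀ x y, (x, y) ∈ a.rel →
      (g a (l x) = g b (l x) ∨ g a (l y) = g b (l y)) →
      (x, y) ∈ b.rel ∧ g a (l x) = g b (l x) ∧ g a (l y) = g b (l y)) :
    BSleq A (pathSg T) := by
  rcases A.eq_empty_or_nonempty with rfl | ⟨a0, ha0⟩
  · exact bs_of_subset (empty_subset _)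
  have hp := hg a0 ha0
  set p := g a0 with hpdef
  let u1 : Chart X :=
    { rel := {q | q.2 = p (l q.1)}
      functional := by
        intro x y y' h h'
        exact Eq.trans h (Eq.symm h')
      injective := by
        intro x x' y h h'
        exact hl (hp.inj (Eq.trans (Eq.symm h) h')) }
  let u2 : Chart X :=
    { rel := {q | ∃ a ∈ A, ∃ x y, (x, y) ∈ a.rel ∧ q = (g a (l x), g a (l y))}
      functional := by
        rintro v w w' ⟨a, ha, x, y, hxy, hq⟩ ⟨b, hb, x', y', hxy', hq'⟩
        simp only [Prod.mk.injEq] at hq hq'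
        have e : g a (l x) = g b (l x') := hq.1.symm.trans hq'.1
        have e2 : x = x' := hl ((hg a ha).inj2 (hg b hb) e)
        subst e2
        obtain ⟨h2, h3, h4⟩ := h1 a ha b hb x y hxy (Or.inl e)
        have := b.functional h2 hxy'
        subst this
        rw [hq.2, hq'.2, h4]
      injective := by
        rintro v w w' ⟨a, ha, x, y, hxy, hq⟩ ⟨b, hb, x', y', hxy', hq'⟩
        simp only [Prod.mk.injEq] at hq hq'
        have e : g a (l y) = g b (l y') := hq.2.symm.trans hq'.2
        have e2 : y = y' := hl ((hg a ha).inj2 (hg b hb) e)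
        subst e2
        obtain ⟨h2, h3, h4⟩ := h1 a ha b hb x y hxy (Or.inr e)
        have := b.injective h2 hxy'
        subst this
        rw [hq.1, hq'.1, h3] }
  let u3 : Chart X :=
    { rel := {q | q.1 = p (l q.2)}
      functional := by
        intro x x' y h h'
        exact hl (hp.inj (Eq.trans (Eq.symm h) h'))
      injective := by
        intro x y y' h h'
        exact Eq.trans h (Eq.symm h') }
  refine ⟨{u1, u2, u3}, by simp, ?_⟩
  intro a ha
  have e : a = u1 * (pathChart hp (hg a ha) * (u2 * (pathChart (hg a ha) hp * u3))) := by
    apply chart_ext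
    intro x y
    simp only [mem_mul]
    constructor
    · intro hxy
      exact ⟨p (l x), rfl, g a (l x), ⟨_, rfl⟩, g a (l y), ⟨a, ha, x, y, hxy, rfl⟩,
        p (l y), ⟨_, rfl⟩, rfl⟩
    · rintro ⟨v, hv, w, ⟨i, hi⟩, w', ⟨b, hb, x', y', hxy', hq⟩, v', ⟨j, hj⟩, hv'⟩
      simp only [Prod.mk.injEq] at hi hj hq
      change v = p (l x) at hv
      change v' = p (l y) at hv'
      have hi1 : i = l x := hp.inj (hi.1.symm.trans hv)
      have hj1 : j = l y := hp.inj (hj.2.symm.trans hv')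
      subst hi1 hj1
      have e : g b (l x') = g a (l x) := hq.1.symm.trans hi.2
      have e2 : x' = x := hl ((hg b hb).inj2 (hg a ha) e)
      have e3 : g b (l y') = g a (l y) := hq.2.symm.trans hj.1
      have e4 : y' = y := hl ((hg b hb).inj2 (hg a ha) e3)
      subst e2 e4
      exact (h1 b hb a ha x' y' hxy' (Or.inl e)).1
  have k1 : InGen (pathSg T ∪ {u1, u2, u3}) u1 := InGen.base (by simp)
  have k2 : InGen (pathSg T ∪ {u1, u2, u3}) u2 := InGen.base (by simp)
  have k3 : InGen (pathSg T ∪ {u1, u2, u3}) u3 := InGen.base (by simp)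
  have k4 : InGen (pathSg T ∪ {u1, u2, u3}) (pathChart hp (hg a ha)) :=
    InGen.base (Or.inl (pathChart_mem hT _ _))
  have k5 : InGen (pathSg T ∪ {u1, u2, u3}) (pathChart (hg a ha) hp) :=
    InGen.base (Or.inl (pathChart_mem hT _ _))
  have := k1.mul (k4.mul (k2.mul (k5.mul k3)))
  rw [← e] at this
  exact this

end tree
end BSP

namespace BSP
variable {X : Type u}

/-- Pairs of points in the blocks from `n` to `m`. -/
def box (π : X → ℕ) (n m : ℕ) : Set (X × X) :=
  {p | (n ≤ π p.1 ∧ π p.1 < m) ∧ (n ≤ π p.2 ∧ π p.2 < m)}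

theorem box_finite {π : X → ℕ} (hπ : ∀ n, {x | π x = n}.Finite) (n m : ℕ) :
    (box π n m).Finite := by
  have h : {x | π x < m}.Finite := by
    have : {x | π x < m} = ⋃ i ∈ Set.Iio m, {x | π x = i} := by
      ext x
      simp
    rw [this]
    exact (Set.finite_Iio m).biUnion fun i _ => hπ i
  refine (h.prod h).subset ?_
  rintro ⟨x, y⟩ ⟨⟨_, h1⟩, ⟨_, h2⟩⟩
  exact ⟨h1, h2⟩

theorem exists_block {n : ℕ → ℕ} (h0 : n 0 = 0) (hn : ∀ k, n k < n (k + 1)) (i : ℕ) :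
    ∃ k, n k ≤ i ∧ i < n (k + 1) := by
  have hs : StrictMono n := strictMono_nat_of_lt_succ hn
  have hex : ∃ k, i < n k := ⟨i + 1, (Nat.lt_succ_self i).trans_le (hs.id_le _)⟩
  classical
  have h1 := Nat.find_spec hex
  have h2 : Nat.find hex ≠ 0 := by
    intro h
    rw [h, h0] at h1
    omega
  obtain ⟨k, hk⟩ := Nat.exists_eq_succ_of_ne_zero h2
  refine ⟨k, ?_, ?_⟩
  · have := Nat.find_min hex (m := k) (by omega)
    omega
  · rw [hk] at h1
    exact h1

theorem bs_coding [Countable X] (T : RTree X) (hT : T.verts = Set.univ) (V : Set X)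
    (R : ℕ → ℕ → Prop) (hR : ∀ n m, R n m → n < m)
    (π : X → ℕ) (hπ : ∀ n, {x | π x = n}.Finite)
    (hroot : T.root ∈ V)
    (hbush : ∀ y ∈ V, ∀ n, ∃ L : ℕ, ∃ z : ℕ × Set (X × X) → X,
      (∀ q, R n q.1 → q.2 ⊆ box π n q.1 → z q ∈ V ∧ T.anc y (z q) ∧ T.level (z q) = L) ∧
      InjOn z {q | R n q.1 ∧ q.2 ⊆ box π n q.1})
    (hext : ∀ y ∈ V, ∀ m, T.level y ≤ m → ∃ w ∈ V, T.anc y w ∧ T.level w = m) :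
    BSleq {a | ∃ n : ℕ → ℕ, n 0 = 0 ∧ (∀ k, R (n k) (n (k + 1))) ∧
      ∀ x y, (x, y) ∈ a.rel → ∀ k, (π x < n k ↔ π y < n k)} (pathSg T) := by
  classical
  set A : Set (Chart X) := {a | ∃ n : ℕ → ℕ, n 0 = 0 ∧ (∀ k, R (n k) (n (k + 1))) ∧
      ∀ x y, (x, y) ∈ a.rel → ∀ k, (π x < n k ↔ π y < n k)} with hA
  obtain ⟨ε, hε⟩ := exists_injective_nat X
  have hsz : ∀ N, ∃ s, ∀ x, π x = N → ε x < s := by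
    intro N
    obtain ⟨s, hs⟩ := ((hπ N).image ε).bddAbove
    exact ⟨s + 1, fun x hx => Nat.lt_succ_of_le (hs ⟨x, hx, rfl⟩)⟩
  choose sz0 hsz0 using hsz
  let sz : ℕ → ℕ := fun N => sz0 N + 1
  have hsz : ∀ x, ε x < sz (π x) := fun x => (hsz0 _ x rfl).trans (Nat.lt_succ_self _)
  have hbush' : ∀ y n, ∃ L : ℕ, ∃ z : ℕ × Set (X × X) → X, y ∈ V →
      (∀ q, R n q.1 → q.2 ⊆ box π n q.1 → z q ∈ V ∧ T.anc y (z q) ∧ T.level (z q) = L) ∧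
      InjOn z {q | R n q.1 ∧ q.2 ⊆ box π n q.1} := by
    intro y n
    by_cases hy : y ∈ V
    · obtain ⟨L, z, h⟩ := hbush y hy n
      exact ⟨L, z, fun _ => h⟩
    · exact ⟨0, fun _ => y, fun h => absurd h hy⟩
  choose L z hz using hbush'
  have hext' : ∀ y m, ∃ w, y ∈ V → T.level y ≤ m → w ∈ V ∧ T.anc y w ∧ T.level w = m := by
    intro y m
    by_cases hy : y ∈ V ∧ T.level y ≤ m
    · obtain ⟨w, h⟩ := hext y hy.1 m hy.2
      exact ⟨w, fun _ _ => h⟩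
    · exact ⟨y, fun h h' => absurd ⟨h, h'⟩ hy⟩
  choose E hE using hext'
  have hC : ∀ n m, {c | c ⊆ box π n m}.Finite := fun n m => (box_finite hπ n m).finite_subsets
  let C : ℕ → ℕ → Finset (Set (X × X)) := fun n m => (hC n m).toFinset
  have memC : ∀ n m c, c ∈ C n m ↔ c ⊆ box π n m := by
    intro n m c
    simp [C]
  let nxt : ℕ → Finset (X × ℕ) × ℕ → Finset (X × ℕ) := fun N s =>
    s.1 ∪ (s.1.biUnion fun p => (C p.2 (N + 1)).image fun c =>
      (E (z p.1 p.2 (N + 1, c)) (s.2 + sz N), N + 1))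
  let st : ℕ → Finset (X × ℕ) × ℕ := fun N => Nat.rec ({(T.root, 0)}, L T.root 0)
    (fun N s => (nxt N s, max (s.2 + sz N) ((nxt N s).sup fun p => L p.1 p.2))) N
  have st_succ : ∀ N, st (N + 1) = (nxt N (st N), max ((st N).2 + sz N)
    ((nxt N (st N)).sup fun p => L p.1 p.2)) := fun N => rfl
  let lam : ℕ → ℕ := fun N => (st N).2
  let S : ℕ → Finset (X × ℕ) := fun N => (st N).1
  have lam_succ : ∀ N, lam N + sz N ≤ lam (N + 1) := by
    intro N
    simp only [lam, st_succ]
    exact le_max_left _ _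
  have lam_mono : Monotone lam := monotone_nat_of_le_succ fun N => by
    have := lam_succ N
    omega
  have S_lam : ∀ N, ∀ p ∈ S N, L p.1 p.2 ≤ lam N := by
    intro N p hp
    cases N with
    | zero =>
      have : p = (T.root, 0) := by simpa [S, st] using hp
      subst this
      exact le_refl _
    | succ N =>
      simp only [S, lam, st_succ] at hp ⊢
      exact (Finset.le_sup (f := fun p : X × ℕ => L p.1 p.2) hp).trans (le_max_right _ _)
  have S_mono : Monotone S := monotone_nat_of_le_succ fun N => by
    simp only [S, st_succ, nxt]
    exact Finset.subset_union_left
  have S_new : ∀ N, ∀ p ∈ S N, ∀ c, c ⊆ box π p.2 (N + 1) →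
      (E (z p.1 p.2 (N + 1, c)) (lam N + sz N), N + 1) ∈ S (N + 1) := by
    intro N p hp c hc
    simp only [S, st_succ, nxt]
    refine Finset.mem_union_right _ (Finset.mem_biUnion.2 ⟨p, hp, ?_⟩)
    exact Finset.mem_image.2 ⟨c, (memC _ _ _).2 hc, rfl⟩
  let l : X → ℕ := fun x => lam (π x) + ε x
  have l_lt : ∀ x N, π x < N → l x < lam (N - 1) + sz (N - 1) := by
    intro x N hx
    have h1 : l x < lam (π x) + sz (π x) := Nat.add_lt_add_left (hsz x) _
    rcases (Nat.le_sub_one_of_lt hx).eq_or_lt with h | h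
    · rw [h] at h1
      exact h1
    · have h2 := lam_succ (π x)
      have h3 := lam_mono (Nat.succ_le_of_lt h)
      simp only [Nat.succ_eq_add_one] at h3
      omega
  have l_ge : ∀ x N, N ≤ π x → lam N ≤ l x := fun x N h =>
    (lam_mono h).trans (Nat.le_add_right _ _)
  have l_inj : Function.Injective l := by
    have key : ∀ x y, π x < π y → l x ≠ l y := by
      intro x y h
      have h1 := l_lt x _ h
      have h2 := lam_succ (π y - 1)
      rw [Nat.sub_add_cancel (by omega)] at h2
      have h3 := l_ge y _ le_rfl
      omega
    intro x y hxy
    rcases lt_trichotomy (π x) (π y) with h | h | h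
    · exact absurd hxy (key x y h)
    · apply hε
      simp only [l, h] at hxy
      omega
    · exact absurd hxy.symm (key y x h)
  have hnn : ∀ a : Chart X, ∃ n : ℕ → ℕ, a ∈ A → n 0 = 0 ∧ (∀ k, R (n k) (n (k + 1))) ∧
      ∀ x y, (x, y) ∈ a.rel → ∀ k, (π x < n k ↔ π y < n k) := by
    intro a
    by_cases ha : a ∈ A
    · obtain ⟨n, hn⟩ := ha
      exact ⟨n, fun _ => hn⟩
    · exact ⟨id, fun h => absurd h ha⟩
  choose n hn using hnn
  let code : Chart X → ℕ → Set (X × X) := fun a k => a.rel ∩ box π (n a k) (n a (k + 1))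
  let Y : Chart X → ℕ → X := fun a k => Nat.rec T.root (fun k y =>
    E (z y (n a k) (n a (k + 1), code a k))
      (lam (n a (k + 1) - 1) + sz (n a (k + 1) - 1))) k
  let ZZ : Chart X → ℕ → X := fun a k => z (Y a k) (n a k) (n a (k + 1), code a k)
  have Y_succ : ∀ a k, Y a (k + 1) = E (ZZ a k)
      (lam (n a (k + 1) - 1) + sz (n a (k + 1) - 1)) := fun a k => rfl
  have n_lt : ∀ a ∈ A, ∀ k, n a k < n a (k + 1) := fun a ha k => hR _ _ ((hn a ha).2.1 k)
  have code_sub : ∀ a k, code a k ⊆ box π (n a k) (n a (k + 1)) := fun a k => inter_subset_right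
  have Y_mem : ∀ a ∈ A, ∀ k, Y a k ∈ V ∧ (Y a k, n a k) ∈ S (n a k) := by
    intro a ha k
    induction k with
    | zero =>
      refine ⟨hroot, ?_⟩
      rw [(hn a ha).1]
      simp [S, st, Y]
    | succ k ih =>
      obtain ⟨hV, hS⟩ := ih
      have hlt := n_lt a ha k
      obtain ⟨h1, h2, h3⟩ := (hz (Y a k) (n a k) hV).1 (n a (k + 1), code a k)
        ((hn a ha).2.1 k) (code_sub a k)
      have hle : n a k ≤ n a (k + 1) - 1 := by omega
      have h4 := S_lam _ _ hS
      have h5 := lam_mono hle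
      refine ⟨?_, ?_⟩
      · rw [Y_succ]
        refine (hE _ _ h1 ?_).1
        rw [h3]
        simp only at h4
        omega
      · have := S_new (n a (k + 1) - 1) _ (S_mono hle hS) (code a k)
        rw [Nat.sub_add_cancel (by omega)] at this
        exact this (code_sub a k)
  have ZZ_prop : ∀ a ∈ A, ∀ k, ZZ a k ∈ V ∧ T.anc (Y a k) (ZZ a k) ∧
      T.level (ZZ a k) = L (Y a k) (n a k) := fun a ha k =>
    (hz (Y a k) (n a k) (Y_mem a ha k).1).1 (n a (k + 1), code a k)
        ((hn a ha).2.1 k) (code_sub a k)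
  have L_le : ∀ a ∈ A, ∀ k, L (Y a k) (n a k) ≤ lam (n a k) := fun a ha k =>
    S_lam _ _ (Y_mem a ha k).2
  have L_le2 : ∀ a ∈ A, ∀ k, L (Y a k) (n a k) ≤ lam (n a (k + 1) - 1) := fun a ha k => by
    refine (L_le a ha k).trans (lam_mono ?_)
    have := n_lt a ha k
    omega
  have Y_prop : ∀ a ∈ A, ∀ k, T.anc (ZZ a k) (Y a (k + 1)) ∧
      T.level (Y a (k + 1)) = lam (n a (k + 1) - 1) + sz (n a (k + 1) - 1) := by
    intro a ha k
    refine (hE (ZZ a k) _ (ZZ_prop a ha k).1 ?_).2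
    rw [(ZZ_prop a ha k).2.2]
    have := L_le2 a ha k
    omega
  have Y_anc : ∀ a ∈ A, ∀ k, T.anc (Y a k) (Y a (k + 1)) := fun a ha k =>
    anc_trans T (ZZ_prop a ha k).2.1 (Y_prop a ha k).1
  have Y_lev : ∀ a ∈ A, ∀ k, k ≤ T.level (Y a k) := by
    intro a ha k
    induction k with
    | zero => exact Nat.zero_le _
    | succ k ih =>
      rw [(Y_prop a ha k).2]
      have h1 := L_le2 a ha k
      have h2 := anc_level T hT (ZZ_prop a ha k).2.1
      rw [(ZZ_prop a ha k).2.2] at h2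
      have h3 : 1 ≤ sz (n a (k + 1) - 1) := Nat.le_add_left _ _
      omega
  let g : Chart X → ℕ → X := fun a i => up T (Y a i) i
  have g_inf : ∀ a ∈ A, IsInf T (g a) := fun a ha => chain_inf hT (Y_anc a ha) (Y_lev a ha)
  have g_eq : ∀ a ∈ A, ∀ k i, i ≤ T.level (Y a k) → g a i = up T (Y a k) i :=
    fun a ha k i hi => chain_up hT (Y_anc a ha) (Y_lev a ha) hi
  have ZZ_eq : ∀ a ∈ A, ∀ k, ZZ a k = g a (L (Y a k) (n a k)) := by
    intro a ha k
    rw [g_eq a ha (k + 1), ← (ZZ_prop a ha k).2.2, up_of_anc T hT (Y_prop a ha k).1]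
    rw [(Y_prop a ha k).2]
    have := L_le2 a ha k
    omega
  have L_mono : ∀ a ∈ A, ∀ j k, j ≤ k → L (Y a j) (n a j) ≤ L (Y a k) (n a k) := by
    intro a ha j k hjk
    rw [← (ZZ_prop a ha j).2.2, ← (ZZ_prop a ha k).2.2]
    rcases hjk.eq_or_lt with rfl | h
    · exact le_refl _
    · have h1 := anc_level T hT (Y_prop a ha j).1
      have h2 := anc_level T hT (chain_anc hT (Y_anc a ha) (Nat.succ_le_of_lt h))
      have h3 := anc_level T hT (ZZ_prop a ha k).2.1
      simp only [Nat.succ_eq_add_one] at h2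
      omega
  have key : ∀ a ∈ A, ∀ b ∈ A, ∀ i k, g a i = g b i → L (Y a k) (n a k) ≤ i →
      ∀ j ≤ k + 1, Y a j = Y b j ∧ n a j = n b j ∧ ∀ j' < j, code a j' = code b j' := by
    intro a ha b hb i k hi hk j
    induction j with
    | zero =>
      intro _
      exact ⟨rfl, by rw [(hn a ha).1, (hn b hb).1], fun j' h => absurd h (Nat.not_lt_zero _)⟩
    | succ j ih =>
      intro hj
      obtain ⟨e1, e2, e3⟩ := ih (by omega)
      have hLj : L (Y a j) (n a j) ≤ i := (L_mono a ha j k (by omega)).trans hk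
      have hzz : ZZ a j = ZZ b j := by
        rw [ZZ_eq a ha, ZZ_eq b hb, ← e1, ← e2, ← (g_inf a ha).up hT hLj,
          ← (g_inf b hb).up hT hLj, hi]
      have hq : ((n a (j + 1), code a j) : ℕ × Set (X × X)) = (n b (j + 1), code b j) := by
        have hzz' : z (Y a j) (n a j) (n a (j + 1), code a j) =
            z (Y a j) (n a j) (n b (j + 1), code b j) := by
          have : ZZ b j = z (Y a j) (n a j) (n b (j + 1), code b j) := by
            rw [e1, e2]
          rw [← this, ← hzz]
        refine (hz (Y a j) (n a j) (Y_mem a ha j).1).2 ?_ ?_ hzz'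
        · exact ⟨(hn a ha).2.1 j, code_sub a j⟩
        · rw [e2]
          exact ⟨(hn b hb).2.1 j, code_sub b j⟩
      simp only [Prod.mk.injEq] at hq
      refine ⟨?_, hq.1, ?_⟩
      · rw [Y_succ, Y_succ, hzz, hq.1]
      · intro j' hj'
        rcases (Nat.lt_succ_iff.1 hj').eq_or_lt with rfl | h
        · exact hq.2
        · exact e3 j' h
  have final : ∀ a ∈ A, ∀ b ∈ A, ∀ k x y, (x, y) ∈ a.rel → (n a k ≤ π x ∧ π x < n a (k + 1)) →
      (n a k ≤ π y ∧ π y < n a (k + 1)) → ∀ w, (n a k ≤ π w ∧ π w < n a (k + 1)) →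
      g a (l w) = g b (l w) →
      (x, y) ∈ b.rel ∧ g a (l x) = g b (l x) ∧ g a (l y) = g b (l y) := by
    intro a ha b hb k x y hxy hx hy w hw hgw
    have h1 := key a ha b hb (l w) k hgw ((L_le a ha k).trans (l_ge w _ hw.1)) (k + 1) le_rfl
    obtain ⟨e1, e2, e3⟩ := h1
    refine ⟨?_, ?_, ?_⟩
    · have hm : (x, y) ∈ code a k := ⟨hxy, hx, hy⟩
      rw [e3 k (Nat.lt_succ_self k)] at hm
      exact hm.1
    · have hle : l x ≤ T.level (Y a (k + 1)) := by
        rw [(Y_prop a ha k).2]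
        exact (l_lt x _ hx.2).le
      rw [g_eq a ha (k + 1) _ hle, g_eq b hb (k + 1) _ (e1 ▸ hle), e1]
    · have hle : l y ≤ T.level (Y a (k + 1)) := by
        rw [(Y_prop a ha k).2]
        exact (l_lt y _ hy.2).le
      rw [g_eq a ha (k + 1) _ hle, g_eq b hb (k + 1) _ (e1 ▸ hle), e1]
  refine bs_of_agree hT A l l_inj g g_inf ?_
  intro a ha b hb x y hxy hor
  obtain ⟨k, hk⟩ := exists_block (hn a ha).1 (n_lt a ha) (π x)
  have hk' : n a k ≤ π y ∧ π y < n a (k + 1) := by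
    have h1 := (hn a ha).2.2 x y hxy k
    have h2 := (hn a ha).2.2 x y hxy (k + 1)
    refine ⟨?_, h2.1 hk.2⟩
    have := mt h1.2 (by omega)
    omega
  rcases hor with h | h
  · exact final a ha b hb k x y hxy hk hk' x hk h
  · exact final a ha b hb k x y hxy hk hk' y hk' h

end BSP

namespace BSP
variable {X : Type u}

/-- The children of `y` inside `V`. -/
def ch (T : RTree X) (V : Set X) (y : X) : Set X := {w | w ∈ V ∧ T.par w = y ∧ w ≠ y}

/-- `V` is the vertex set of a subtree. -/
def SubV (T : RTree X) (V : Set X) : Prop := T.root ∈ V ∧ ∀ x ∈ V, T.par x ∈ V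

theorem SubV.iter {T : RTree X} {V : Set X} (h : SubV T V) {x : X} (hx : x ∈ V) (n : ℕ) :
    T.par^[n] x ∈ V := by
  induction n with
  | zero => exact hx
  | succ n ih =>
    rw [Function.iterate_succ_apply']
    exact h.2 _ ih

theorem SubV.anc {T : RTree X} {V : Set X} (h : SubV T V) {x y : X} (hy : y ∈ V)
    (ha : T.anc x y) : x ∈ V := by
  obtain ⟨n, rfl⟩ := ha
  exact h.iter hy n

theorem subV_of_subtree {T T' : RTree X} (h : IsSubtree T' T) : SubV T T'.verts := by
  refine ⟨h.2.1 ▸ T'.root_mem, fun x hx => ?_⟩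
  rw [← h.2.2 x hx]
  exact T'.par_mem x hx

theorem subtree_iter {T T' : RTree X} (h : IsSubtree T' T) {y : X} (hy : y ∈ T'.verts) (n : ℕ) :
    T'.par^[n] y = T.par^[n] y := by
  induction n with
  | zero => rfl
  | succ n ih =>
    rw [Function.iterate_succ_apply', Function.iterate_succ_apply', ih]
    exact h.2.2 _ ((subV_of_subtree h).iter hy n)

theorem subtree_anc {T T' : RTree X} (h : IsSubtree T' T) {x y : X} (hy : y ∈ T'.verts)
    (ha : T'.anc x y) : T.anc x y := by
  obtain ⟨n, rfl⟩ := ha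
  exact ⟨n, (subtree_iter h hy n).symm⟩

theorem subtree_nbhd {T T' : RTree X} (h : IsSubtree T' T) (y : X) :
    T'.nbhd y ⊆ insert (T'.par y) (ch T T'.verts y) := by
  rintro w ⟨hw, ⟨h1, h2⟩ | ⟨h1, h2⟩⟩
  · right
    refine ⟨hw, ?_, h2⟩
    rw [← h.2.2 w hw, h1]
  · left
    exact h1.symm

theorem ch_infinite {T T' : RTree X} (h : IsSubtree T' T) {y : X} (hy : (T'.nbhd y).Infinite) :
    (ch T T'.verts y).Infinite := by
  intro hf
  exact hy ((hf.insert _).subset (subtree_nbhd h y))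

theorem ch_nontrivial {T T' : RTree X} (h : IsSubtree T' T) {y : X} (hy : 3 ≤ #↥(T'.nbhd y)) :
    (ch T T'.verts y).Nontrivial := by
  by_contra hn
  rw [Set.not_nontrivial_iff] at hn
  have h1 := Cardinal.mk_le_mk_of_subset (subtree_nbhd h y)
  have h2 : #↥(insert (T'.par y) (ch T T'.verts y)) ≤ 1 + 1 := by
    refine Cardinal.mk_insert_le.trans ?_
    gcongr
    exact Cardinal.mk_le_one_iff_set_subsingleton.2 hn
  have h3 := (hy.trans h1).trans h2
  have : (3 : Cardinal.{u}) ≤ ((2 : ℕ) : Cardinal.{u}) := by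
    refine h3.trans (le_of_eq ?_)
    norm_num
  have : ((3 : ℕ) : Cardinal.{u}) ≤ ((2 : ℕ) : Cardinal.{u}) := by exact_mod_cast this
  rw [Nat.cast_le] at this
  omega

/-- The subtree on `V`. -/
def mkSub (T : RTree X) (hT : T.verts = Set.univ) (V : Set X) (h : SubV T V) : RTree X where
  verts := V
  root := T.root
  root_mem := h.1
  par := T.par
  par_mem := h.2
  par_root := T.par_root
  par_reaches := fun x _ => T.par_reaches x (by rw [hT]; trivial)

theorem mkSub_subtree (T : RTree X) (hT : T.verts = Set.univ) (V : Set X) (h : SubV T V) :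
    IsSubtree (mkSub T hT V h) T :=
  ⟨by rw [hT]; exact subset_univ _, rfl, fun _ _ => rfl⟩

theorem mkSub_ch (T : RTree X) (hT : T.verts = Set.univ) (V : Set X) (h : SubV T V) (y : X) :
    ch T V y ⊆ (mkSub T hT V h).nbhd y := fun _ hw => ⟨hw.1, Or.inl ⟨hw.2.1, hw.2.2⟩⟩

/-- Every vertex of `V` has a branching descendant. -/
def Perf (T : RTree X) (V : Set X) : Prop := ∀ x ∈ V, ∃ y ∈ V, T.anc x y ∧ (ch T V y).Nontrivial

theorem ch_level {T : RTree X} (hT : T.verts = Set.univ) {V : Set X} {y w : X} (h : w ∈ ch T V y) :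
    T.level w = T.level y + 1 := by
  obtain ⟨_, rfl, h2⟩ := h
  exact level_child T hT h2.symm

theorem ch_anc {T : RTree X} {V : Set X} {y w : X} (h : w ∈ ch T V y) : T.anc y w :=
  ⟨1, h.2.1⟩

theorem perf_subtree {T : RTree X} (hT : T.verts = Set.univ) {V : Set X} (h : SubV T V)
    (hp : Perf T V) : ∃ T' : RTree X, IsSubtree T' T ∧
        ∀ x ∈ T'.verts, ∃ y ∈ T'.verts, T'.anc x y ∧ 3 ≤ #↥(T'.nbhd y) := by
  classical
  refine ⟨mkSub T hT V h, mkSub_subtree T hT V h, ?_⟩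
  intro x hx
  obtain ⟨y, hy, hxy, hne⟩ := hp x hx
  obtain ⟨w, hw⟩ := hne.nonempty
  obtain ⟨y2, hy2, hwy2, c1, hc1, c2, hc2, hc⟩ := hp w hw.1
  refine ⟨y2, hy2, anc_trans T hxy (anc_trans T (ch_anc hw) hwy2), ?_⟩
  have l1 := ch_level hT hw
  have l2 := anc_level T hT hwy2
  have l3 := ch_level hT hc1
  have l4 := ch_level hT hc2
  have l5 := level_par T hT y2
  have hpm : T.par y2 ∈ (mkSub T hT V h).nbhd y2 := by
    refine ⟨h.2 _ hy2, Or.inr ⟨rfl, ?_⟩⟩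
    intro e
    rw [← e] at l5
    omega
  let s : Finset ↥((mkSub T hT V h).nbhd y2) :=
    {⟨c1, mkSub_ch T hT V h _ hc1⟩, ⟨c2, mkSub_ch T hT V h _ hc2⟩, ⟨T.par y2, hpm⟩}
  have hs : s.card = 3 := by
    apply Finset.card_eq_three.2
    refine ⟨_, _, _, ?_, ?_, ?_, rfl⟩
    · intro e
      exact hc (congrArg Subtype.val e)
    · intro e
      have : c1 = T.par y2 := congrArg Subtype.val e
      rw [← this] at l5
      omega
    · intro e
      have : c2 = T.par y2 := congrArg Subtype.val e
      rw [← this] at l5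
      omega
  have : #s ≤ #↥((mkSub T hT V h).nbhd y2) := Cardinal.mk_subtype_le (· ∈ s)
  rw [Cardinal.mk_coe_finset, hs] at this
  exact_mod_cast this

theorem perf_ext {T : RTree X} (hT : T.verts = Set.univ) {V : Set X} (h : SubV T V)
    (hp : Perf T V) : ∀ y ∈ V, ∀ m, T.level y ≤ m → ∃ w ∈ V, T.anc y w ∧ T.level w = m := by
  intro y hy m hm
  induction m, hm using Nat.le_induction with
  | base => exact ⟨y, hy, anc_refl T y, rfl⟩
  | succ m hm ih =>
    obtain ⟨w, hw, hyw, hl⟩ := ih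
    obtain ⟨y', hy', hwy', hne⟩ := hp w hw
    obtain ⟨c, hc⟩ := hne.nonempty
    have l1 := ch_level hT hc
    have l2 := anc_level T hT hwy'
    have l3 : T.level (up T c (m + 1)) = m + 1 := level_up T hT (by omega)
    refine ⟨up T c (m + 1), h.anc hc.1 (anc_up T _ _), ?_, l3⟩
    refine anc_trans T hyw ?_
    exact anc_of_anc_of_le T hT (anc_trans T hwy' (ch_anc hc)) (anc_up T _ _) (by omega)

theorem perf_many {T : RTree X} (hT : T.verts = Set.univ) {V : Set X} (h : SubV T V)
    (hp : Perf T V) (K : ℕ) : ∀ y ∈ V, ∃ L, T.level y ≤ L ∧ ∃ s : Finset X, s.card = K ∧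
      ∀ w ∈ s, w ∈ V ∧ T.anc y w ∧ T.level w = L := by
  classical
  induction K with
  | zero =>
    intro y hy
    exact ⟨T.level y, le_rfl, ∅, rfl, by simp⟩
  | succ K ih =>
    intro y hy
    obtain ⟨y', hy', hyy', c1, hc1, c2, hc2, hc⟩ := hp y hy
    obtain ⟨L, hL, s, hs, hsp⟩ := ih c1 hc1.1
    have l1 := ch_level hT hc1
    have l2 := ch_level hT hc2
    have l3 := anc_level T hT hyy'
    obtain ⟨w, hw, hcw, hlw⟩ := perf_ext hT h hp c2 hc2.1 L (by omega)
    refine ⟨L, by omega, insert w s, ?_, ?_⟩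
    · rw [Finset.card_insert_of_notMem, hs]
      intro hws
      obtain ⟨_, h2, _⟩ := hsp w hws
      apply hc
      rw [← up_of_anc T hT h2, ← up_of_anc T hT hcw, l1, l2]
    · intro v hv
      rcases Finset.mem_insert.1 hv with rfl | hv
      · exact ⟨hw, anc_trans T hyy' (anc_trans T (ch_anc hc2) hcw), hlw⟩
      · obtain ⟨h1, h2, h3⟩ := hsp v hv
        exact ⟨h1, anc_trans T hyy' (anc_trans T (ch_anc hc1) h2), h3⟩

theorem lowerB [Countable X] {T : RTree X} (hT : T.verts = Set.univ) {V : Set X} (h : SubV T V)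
    (hp : Perf T V) (Pω : Set (Set X)) (hpart : Setoid.IsPartition Pω)
    (hfin : ∀ B ∈ Pω, B.Finite) : BSleq (PStab Pω) (pathSg T) := by
  have hcount : Pω.Countable := by
    refine (Set.countable_ofPred_finite_subset (s := (Set.univ : Set X))
      (Set.to_countable _)).mono ?_
    intro B hB
    exact ⟨hfin B hB, subset_univ _⟩
  obtain ⟨ν, hν⟩ := Set.countable_iff_exists_injOn.1 hcount
  have hex : ∀ x, ∃ B, B ∈ Pω ∧ x ∈ B := fun x => by
    obtain ⟨B, hB, _⟩ := hpart.2 x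
    exact ⟨B, hB⟩
  choose pt hpt using hex
  have hpt_eq : ∀ B ∈ Pω, ∀ x ∈ B, pt x = B := by
    intro B hB x hx
    exact (hpart.2 x).unique (hpt x) ⟨hB, hx⟩
  let π : X → ℕ := fun x => ν (pt x)
  have hπ : ∀ n, {x | π x = n}.Finite := by
    intro n
    rcases Set.eq_empty_or_nonempty {x | π x = n} with he | ⟨x0, hx0⟩
    · rw [he]
      exact finite_empty
    · refine (hfin _ (hpt x0).1).subset ?_
      intro x hx
      have : pt x = pt x0 := hν (hpt x).1 (hpt x0).1 (Eq.trans hx hx0.symm)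
      rw [← this]
      exact (hpt x).2
  have main := bs_coding T hT V (fun n m => m = n + 1) (fun n m e => by omega) π hπ h.1 ?_
    (perf_ext hT h hp)
  · refine bs_trans (bs_of_subset ?_) main
    intro f hf
    refine ⟨id, rfl, fun _ => rfl, ?_⟩
    intro x y hxy k
    have hy : y ∈ pt x := by
      rw [← hf.2 (pt x) (hpt x).1]
      exact ⟨x, (hpt x).2, hxy⟩
    have : pt y = pt x := hpt_eq _ (hpt x).1 y hy
    simp only [π, this]
  · intro y hy n
    set Q : Set (ℕ × Set (X × X)) := {q | q.1 = n + 1 ∧ q.2 ⊆ box π n q.1} with hQ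
    have hQf : Q.Finite := by
      refine (((box_finite hπ n (n + 1)).finite_subsets).image (fun c => (n + 1, c))).subset ?_
      rintro ⟨m, c⟩ ⟨h1, h2⟩
      simp only at h1
      subst h1
      exact ⟨c, h2, rfl⟩
    obtain ⟨L, _, s, hs, hsp⟩ := perf_many hT h hp hQf.toFinset.card y hy
    have : Nonempty X := ⟨y⟩
    obtain ⟨z, hz1, hz2⟩ := hQf.exists_injOn_of_encard_le (t := (s : Set X)) (by
      rw [Set.encard_coe_eq_coe_finsetCard, hs, hQf.encard_eq_coe_toFinset_card])
    refine ⟨L, z, ?_, hz2⟩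
    intro q h1 h2
    exact hsp _ (hz1 ⟨h1, h2⟩)

theorem exists_bound {F : ℕ → ℕ → Prop} (hF : ∀ a b b', F a b → F a b' → b = b') (N : ℕ) :
    ∃ M, ∀ a b, F a b → a < N → b < M := by
  induction N with
  | zero => exact ⟨0, fun a b _ h => absurd h (Nat.not_lt_zero _)⟩
  | succ N ih =>
    obtain ⟨M, hM⟩ := ih
    rcases Classical.em (∃ b, F N b) with hb | hb
    · obtain ⟨b, hb⟩ := hb
      refine ⟨max M (b + 1), ?_⟩
      intro a b' hab ha
      rcases (Nat.lt_succ_iff.1 ha).eq_or_lt with rfl | h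
      · have := hF _ _ _ hb hab
        omega
      · have := hM a b' hab h
        omega
    · refine ⟨M, ?_⟩
      intro a b' hab ha
      rcases (Nat.lt_succ_iff.1 ha).eq_or_lt with rfl | h
      · exact absurd ⟨_, hab⟩ hb
      · exact hM a b' hab h

theorem univ_le_blocks (e : X ≃ ℕ) :
    BSleq (Set.univ : Set (Chart X)) {a | ∃ n : ℕ → ℕ, n 0 = 0 ∧ (∀ k, n k < n (k + 1)) ∧
      ∀ x y, (x, y) ∈ a.rel → ∀ k, (e x < n k ↔ e y < n k)} := by
  set A : Set (Chart X) := {a | ∃ n : ℕ → ℕ, n 0 = 0 ∧ (∀ k, n k < n (k + 1)) ∧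
      ∀ x y, (x, y) ∈ a.rel → ∀ k, (e x < n k ↔ e y < n k)} with hA
  let i0 : X → X := fun x => e.symm (2 * e x)
  let i1 : X → X := fun x => e.symm (2 * e x + 1)
  have e0 : ∀ x, e (i0 x) = 2 * e x := fun x => by simp [i0]
  have e1 : ∀ x, e (i1 x) = 2 * e x + 1 := fun x => by simp [i1]
  have inj0 : ∀ x y, i0 x = i0 y → x = y := fun x y h => by
    have := congrArg e h
    rw [e0, e0] at this
    exact e.injective (by omega)
  have inj1 : ∀ x y, i1 x = i1 y → x = y := fun x y h => by
    have := congrArg e h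
    rw [e1, e1] at this
    exact e.injective (by omega)
  have inj01 : ∀ x y, i0 x ≠ i1 y := fun x y h => by
    have := congrArg e h
    rw [e0, e1] at this
    omega
  let u1 : Chart X :=
    { rel := {q | q.2 = i0 q.1}
      functional := fun x y y' h h' => Eq.trans h (Eq.symm h')
      injective := fun x x' y h h' => inj0 _ _ (Eq.trans (Eq.symm h) h') }
  let u2 : Chart X :=
    { rel := {q | q.1 = i1 q.2}
      functional := fun x y y' h h' => inj1 _ _ (Eq.trans (Eq.symm h) h')
      injective := fun x x' y h h' => Eq.trans h (Eq.symm h') }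
  refine ⟨{u1, u2}, by simp, ?_⟩
  intro f _
  have hM : ∀ N, ∃ M, N < M ∧ ∀ x y, (x, y) ∈ f.rel → (e x < N → e y < M) ∧
      (e y < N → e x < M) := by
    intro N
    obtain ⟨M1, h1⟩ := exists_bound (F := fun a b => (e.symm a, e.symm b) ∈ f.rel)
      (fun a b b' h h' => e.symm.injective (f.functional h h')) N
    obtain ⟨M2, h2⟩ := exists_bound (F := fun a b => (e.symm b, e.symm a) ∈ f.rel)
      (fun a b b' h h' => e.symm.injective (f.injective h h')) N
    refine ⟨max (N + 1) (max M1 M2), by omega, ?_⟩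
    intro x y hxy
    have h3 := h1 (e x) (e y) (by simpa using hxy)
    have h4 := h2 (e y) (e x) (by simpa using hxy)
    refine ⟨fun h => ?_, fun h => ?_⟩
    · have := h3 h
      omega
    · have := h4 h
      omega
  choose M hM1 hM2 using hM
  let n : ℕ → ℕ := fun k => Nat.rec 0 (fun _ m => M m) k
  have n0 : n 0 = 0 := rfl
  have ns : ∀ k, n (k + 1) = M (n k) := fun k => rfl
  have nlt : ∀ k, n k < n (k + 1) := fun k => by
    rw [ns]
    exact hM1 _
  have nmono : StrictMono n := strictMono_nat_of_lt_succ nlt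
  have nf : ∀ x y, (x, y) ∈ f.rel → ∀ k, (e x < n k → e y < n (k + 1)) ∧
      (e y < n k → e x < n (k + 1)) := fun x y hxy k => by
    rw [ns]
    exact hM2 _ x y hxy
  let At : X → X → Prop := fun x y => ∀ k, e x < n (2 * k) ↔ e y < n (2 * k)
  have hAt : ∀ x y, (x, y) ∈ f.rel → ¬ At x y → ∀ k, (e x < n (2 * k + 1) ↔ e y < n (2 * k + 1)) := by
    intro x y hxy hna k
    simp only [At, not_forall] at hna
    obtain ⟨j, hj⟩ := hna
    have f1 := nf x y hxy (2 * j)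
    have f2 := nf x y hxy (2 * k + 1)
    rcases lt_or_ge (2 * j) (2 * k + 1) with h | h
    · have := nmono.monotone (show 2 * j + 1 ≤ 2 * k + 1 by omega)
      rcases Classical.em (e x < n (2 * j)) with h1 | h1 <;>
        rcases Classical.em (e y < n (2 * j)) with h2 | h2
      · simp [h1, h2] at hj
      · have := f1.1 h1
        constructor <;> intro <;> omega
      · have := f1.2 h2
        constructor <;> intro <;> omega
      · simp [h1, h2] at hj
    · have := nmono.monotone (show 2 * k + 1 + 1 ≤ 2 * j by omega)
      rcases Classical.em (e x < n (2 * j)) with h1 | h1 <;>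
        rcases Classical.em (e y < n (2 * j)) with h2 | h2
      · simp [h1, h2] at hj
      · constructor
        · intro h3
          have := f2.1 h3
          omega
        · intro h3
          have := nmono.monotone (show 2 * k + 1 ≤ 2 * j by omega)
          omega
      · constructor
        · intro h3
          have := nmono.monotone (show 2 * k + 1 ≤ 2 * j by omega)
          omega
        · intro h3
          have := f2.2 h3
          omega
      · simp [h1, h2] at hj
  let α : Chart X :=
    { rel := {q | ∃ x y, (x, y) ∈ f.rel ∧ q.1 = i0 x ∧
        ((At x y ∧ q.2 = i1 y) ∨ (¬ At x y ∧ q.2 = i0 x))}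
      functional := by
        rintro p q q' ⟨x, y, hxy, h1, h2⟩ ⟨x', y', hxy', h1', h2'⟩
        simp only at h1 h2 h1' h2'
        have := inj0 _ _ (h1.symm.trans h1')
        subst this
        have := f.functional hxy hxy'
        subst this
        rcases h2 with ⟨h3, h4⟩ | ⟨h3, h4⟩ <;> rcases h2' with ⟨h3', h4'⟩ | ⟨h3', h4'⟩
        · rw [h4, h4']
        · exact absurd h3 h3'
        · exact absurd h3' h3
        · rw [h4, h4']
      injective := by
        rintro p q q' ⟨x, y, hxy, h1, h2⟩ ⟨x', y', hxy', h1', h2'⟩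
        simp only at h1 h2 h1' h2'
        rcases h2 with ⟨h3, h4⟩ | ⟨h3, h4⟩ <;> rcases h2' with ⟨h3', h4'⟩ | ⟨h3', h4'⟩
        · have := inj1 _ _ (h4.symm.trans h4')
          subst this
          have := f.injective hxy hxy'
          subst this
          rw [h1, h1']
        · exact absurd (h4'.symm.trans h4) (inj01 _ _)
        · exact absurd (h4.symm.trans h4') (inj01 _ _)
        · rw [h1, h1', ← h4, ← h4'] }
  let β : Chart X :=
    { rel := {q | ∃ x y, (x, y) ∈ f.rel ∧ q.2 = i1 y ∧
        ((At x y ∧ q.1 = i1 y) ∨ (¬ At x y ∧ q.1 = i0 x))}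
      functional := by
        rintro p q q' ⟨x, y, hxy, h1, h2⟩ ⟨x', y', hxy', h1', h2'⟩
        simp only at h1 h2 h1' h2'
        rcases h2 with ⟨h3, h4⟩ | ⟨h3, h4⟩ <;> rcases h2' with ⟨h3', h4'⟩ | ⟨h3', h4'⟩
        · rw [h1, h1', ← h4, ← h4']
        · exact absurd (h4'.symm.trans h4) (inj01 _ _)
        · exact absurd (h4.symm.trans h4') (inj01 _ _)
        · have := inj0 _ _ (h4.symm.trans h4')
          subst this
          have := f.functional hxy hxy'
          subst this
          rw [h1, h1']
      injective := by
        rintro p q q' ⟨x, y, hxy, h1, h2⟩ ⟨x', y', hxy', h1', h2'⟩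
        simp only at h1 h2 h1' h2'
        have := inj1 _ _ (h1.symm.trans h1')
        subst this
        have := f.injective hxy hxy'
        subst this
        rcases h2 with ⟨h3, h4⟩ | ⟨h3, h4⟩ <;> rcases h2' with ⟨h3', h4'⟩ | ⟨h3', h4'⟩
        · rw [h4, h4']
        · exact absurd h3 h3'
        · exact absurd h3' h3
        · rw [h4, h4'] }
  have hα : α ∈ A := by
    refine ⟨fun k => 2 * n (2 * k), by simp [n0], ?_, ?_⟩
    · intro k
      have := nmono (show 2 * k < 2 * (k + 1) by omega)
      simp only
      omega
    · rintro p q ⟨x, y, hxy, h1, ⟨h2, h3⟩ | ⟨h2, h3⟩⟩ k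
      · simp only at h1 h3
        have := h2 k
        rw [h1, h3, e0, e1]
        show 2 * e x < 2 * n (2 * k) ↔ 2 * e y + 1 < 2 * n (2 * k)
        constructor <;> intro <;> omega
      · simp only at h1 h3
        rw [h1, h3]
  have hβ : β ∈ A := by
    refine ⟨fun k => if k = 0 then 0 else 2 * n (2 * (k - 1) + 1), by simp, ?_, ?_⟩
    · intro k
      simp only [Nat.add_eq_zero_iff, one_ne_zero, and_false, if_false, Nat.add_sub_cancel]
      split_ifs with hk
      · have := nlt (2 * k)
        omega
      · have := nmono (show 2 * (k - 1) + 1 < 2 * k + 1 by omega)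
        omega
    · rintro p q ⟨x, y, hxy, h1, ⟨h2, h3⟩ | ⟨h2, h3⟩⟩ k
      · simp only at h1 h3
        rw [h1, h3]
      · simp only at h1 h3
        rw [h1, h3, e0, e1]
        simp only
        split_ifs with hk
        · simp
        · have := hAt x y hxy h2 (k - 1)
          constructor <;> intro <;> omega
  have hf : f = u1 * (α * (β * u2)) := by
    apply chart_ext
    intro x y
    simp only [mem_mul]
    constructor
    · intro hxy
      rcases Classical.em (At x y) with ht | ht
      · exact ⟨i0 x, rfl, i1 y, ⟨x, y, hxy, rfl, Or.inl ⟨ht, rfl⟩⟩, i1 y,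
          ⟨x, y, hxy, rfl, Or.inl ⟨ht, rfl⟩⟩, rfl⟩
      · exact ⟨i0 x, rfl, i0 x, ⟨x, y, hxy, rfl, Or.inr ⟨ht, rfl⟩⟩, i1 y,
          ⟨x, y, hxy, rfl, Or.inr ⟨ht, rfl⟩⟩, rfl⟩
    · rintro ⟨v, hv, w, ⟨x', y', hxy, h1, h2⟩, v', ⟨x2, y2, hxy2, h3, h4⟩, hv'⟩
      change v = i0 x at hv
      change v' = i1 y at hv'
      simp only at h1 h2 h3 h4
      have := inj0 _ _ (hv.symm.trans h1)
      subst this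
      have := inj1 _ _ (hv'.symm.trans h3)
      subst this
      rcases h2 with ⟨h5, h6⟩ | ⟨h5, h6⟩ <;> rcases h4 with ⟨h7, h8⟩ | ⟨h7, h8⟩
      · have := inj1 _ _ (h6.symm.trans h8)
        subst this
        exact hxy
      · exact absurd (h8.symm.trans h6) (inj01 _ _)
      · exact absurd (h6.symm.trans h8) (inj01 _ _)
      · have := inj0 _ _ (h6.symm.trans h8)
        subst this
        exact hxy2
  have k1 : InGen (A ∪ {u1, u2}) u1 := InGen.base (by simp)
  have k2 : InGen (A ∪ {u1, u2}) u2 := InGen.base (by simp)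
  have k3 : InGen (A ∪ {u1, u2}) α := InGen.base (Or.inl hα)
  have k4 : InGen (A ∪ {u1, u2}) β := InGen.base (Or.inl hβ)
  have := k1.mul (k3.mul (k4.mul k2))
  rw [← hf] at this
  exact this

theorem lowerA [Countable X] [Infinite X] {T : RTree X} (hT : T.verts = Set.univ) {V : Set X}
    (h : SubV T V) (hp : ∀ x ∈ V, ∃ y ∈ V, T.anc x y ∧ (ch T V y).Infinite) :
    BSleq (Set.univ : Set (Chart X)) (pathSg T) := by
  have hp' : Perf T V := fun x hx => by
    obtain ⟨y, hy, h1, h2⟩ := hp x hx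
    exact ⟨y, hy, h1, h2.nontrivial⟩
  obtain ⟨e⟩ : Nonempty (X ≃ ℕ) := nonempty_equiv_of_countable
  have hπ : ∀ n, {x | e x = n}.Finite := by
    intro n
    refine (Set.finite_singleton (e.symm n)).subset ?_
    rintro x rfl
    simp
  refine bs_trans (univ_le_blocks e) (bs_coding T hT V (fun n m => n < m) (fun _ _ h => h) e
    hπ h.1 ?_ (perf_ext hT h hp'))
  intro y hy n
  obtain ⟨y', hy', hyy', hinf⟩ := hp y hy
  have hQ : ({q : ℕ × Set (X × X) | n < q.1 ∧ q.2 ⊆ box e n q.1}).Countable := by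
    have : {q : ℕ × Set (X × X) | n < q.1 ∧ q.2 ⊆ box e n q.1} ⊆
        ⋃ m : ℕ, (fun c => (m, c)) '' {c | c ⊆ box e n m} := by
      rintro ⟨m, c⟩ ⟨_, h2⟩
      exact mem_iUnion.2 ⟨m, c, h2, rfl⟩
    refine (countable_iUnion fun m => ?_).mono this
    exact (((box_finite hπ n m).finite_subsets).image _).countable
  obtain ⟨ν, hν⟩ := Set.countable_iff_exists_injOn.1 hQ
  let φ := hinf.natEmbedding
  refine ⟨T.level y' + 1, fun q => φ (ν q), ?_, ?_⟩
  · intro q _ _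
    have hm := (φ (ν q)).2
    exact ⟨hm.1, anc_trans T hyy' (ch_anc hm), ch_level hT hm⟩
  · intro q hq q' hq' he
    exact hν hq hq' (φ.injective (Subtype.ext he))

end BSP

namespace BSP
variable {X : Type u}

theorem upper_local (Pω : Set (Set X)) (hpart : Setoid.IsPartition Pω)
    (hfin : ∀ B ∈ Pω, B.Finite) (hunb : ∀ n : ℕ, ∃ B ∈ Pω, n ≤ B.ncard)
    (κ : X → ℕ) (hκ : ∀ n, {x | κ x = n}.Finite) :
    BSleq {f : Chart X | ∀ x y, (x, y) ∈ f.rel → κ x = κ y} (PStab Pω) := by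
  classical
  choose B hB hBn using hunb
  let S : ℕ → Set (X × Bool) := fun i => {p | κ p.1 = i}
  have hS : ∀ i, (S i).Finite := by
    intro i
    refine ((hκ i).prod (Set.finite_univ (α := Bool))).subset ?_
    intro p hp
    exact ⟨hp, trivial⟩
  let m : ℕ → ℕ := fun i =>
    Nat.rec (S 0).ncard (fun i m => max (S (i + 1)).ncard ((B m).ncard + 1)) i
  have m0 : m 0 = (S 0).ncard := rfl
  have ms : ∀ i, m (i + 1) = max (S (i + 1)).ncard ((B (m i)).ncard + 1) := fun i => rfl
  have hmS : ∀ i, (S i).ncard ≤ m i := by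
    intro i
    cases i with
    | zero => exact le_of_eq m0.symm
    | succ i =>
      rw [ms]
      exact le_max_left _ _
  let J : ℕ → Set X := fun i => B (m i)
  have hJ : ∀ i, J i ∈ Pω := fun i => hB _
  have hJS : ∀ i, (S i).ncard ≤ (J i).ncard := fun i => (hmS i).trans (hBn _)
  have hJinj : ∀ i j, J i = J j → i = j := by
    have : StrictMono (fun i => (J i).ncard) := by
      apply strictMono_nat_of_lt_succ
      intro i
      have h1 := hBn (m (i + 1))
      have h2 := ms i
      have h3 : (B (m i)).ncard + 1 ≤ m (i + 1) := by
        rw [h2]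
        exact le_max_right _ _
      show (B (m i)).ncard < (B (m (i + 1))).ncard
      omega
    intro i j hij
    exact this.injective (congrArg Set.ncard hij)
  have hpeq : ∀ B ∈ Pω, ∀ C ∈ Pω, ∀ x, x ∈ B → x ∈ C → B = C := by
    intro B hB C hC x h1 h2
    exact (hpart.2 x).unique ⟨hB, h1⟩ ⟨hC, h2⟩
  have hz : ∀ i, ∃ z : X × Bool → X, (∀ p, κ p.1 = i → z p ∈ J i) ∧
      ∀ p q, κ p.1 = i → κ q.1 = i → z p = z q → p = q := by
    intro i
    obtain ⟨x0, _⟩ : (J i).Nonempty := by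
      rw [Set.nonempty_iff_ne_empty]
      intro he
      have := hJ i
      rw [he] at this
      exact hpart.1 this
    have : Nonempty X := ⟨x0⟩
    obtain ⟨z, hz1, hz2⟩ := (hS i).exists_injOn_of_encard_le (t := J i) (by
      rw [← (hS i).cast_ncard_eq, ← (hfin _ (hJ i)).cast_ncard_eq]
      exact_mod_cast hJS i)
    exact ⟨z, fun p hp => hz1 hp, fun p q hp hq e => hz2 hp hq e⟩
  choose z hz1 hz2 using hz
  let θ : X × Bool → X := fun p => z (κ p.1) p
  have hθJ : ∀ p, θ p ∈ J (κ p.1) := fun p => hz1 _ p rfl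
  have hθ : ∀ p q, θ p = θ q → p = q := by
    intro p q h
    have h1 : J (κ p.1) = J (κ q.1) :=
      hpeq _ (hJ _) _ (hJ _) (θ p) (hθJ p) (by rw [h]; exact hθJ q)
    have h2 := hJinj _ _ h1
    refine hz2 (κ p.1) p q rfl h2.symm ?_
    change z (κ p.1) p = z (κ q.1) q at h
    rwa [← h2] at h
  have hθ0 : ∀ x y b, θ (x, b) = θ (y, b) → x = y := fun x y b h => congrArg Prod.fst (hθ _ _ h)
  have hθ1 : ∀ x y, θ (x, false) ≠ θ (y, true) := fun x y h => by
    have := congrArg Prod.snd (hθ _ _ h)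
    simp at this
  let u1 : Chart X :=
    { rel := {q | q.2 = θ (q.1, false)}
      functional := fun x y y' h h' => Eq.trans h (Eq.symm h')
      injective := fun x x' y h h' => hθ0 _ _ _ (Eq.trans (Eq.symm h) h') }
  let u2 : Chart X :=
    { rel := {q | q.1 = θ (q.2, true)}
      functional := fun x y y' h h' => hθ0 _ _ _ (Eq.trans (Eq.symm h) h')
      injective := fun x x' y h h' => Eq.trans h (Eq.symm h') }
  refine ⟨{u1, u2}, by simp, ?_⟩
  intro f hf
  let R : X → X → Prop := fun a b => (∃ x y, (x, y) ∈ f.rel ∧ a = θ (x, false) ∧ b = θ (y, true)) ∨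
    (∃ x y, (x, y) ∈ f.rel ∧ a = θ (y, true) ∧ b = θ (x, false)) ∨
    (a = b ∧ ¬ ∃ x y, (x, y) ∈ f.rel ∧ (a = θ (x, false) ∨ a = θ (y, true)))
  have Rsymm : ∀ a b, R a b → R b a := by
    rintro a b (⟨x, y, h, h1, h2⟩ | ⟨x, y, h, h1, h2⟩ | ⟨rfl, h⟩)
    · exact Or.inr (Or.inl ⟨x, y, h, h2, h1⟩)
    · exact Or.inl ⟨x, y, h, h2, h1⟩
    · exact Or.inr (Or.inr ⟨rfl, h⟩)
  have Rfun : ∀ a b c, R a b → R a c → b = c := by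
    rintro a b c (⟨x, y, h, h1, h2⟩ | ⟨x, y, h, h1, h2⟩ | ⟨h1, h⟩)
      (⟨x', y', h', h1', h2'⟩ | ⟨x', y', h', h1', h2'⟩ | ⟨h1', h'⟩)
    · have := hθ0 _ _ _ (h1.symm.trans h1')
      subst this
      have := f.functional h h'
      subst this
      rw [h2, h2']
    · exact absurd (h1.symm.trans h1') (hθ1 _ _)
    · exact absurd ⟨x, y, h, Or.inl h1⟩ h'
    · exact absurd (h1'.symm.trans h1) (hθ1 _ _)
    · have := hθ0 _ _ _ (h1.symm.trans h1')
      subst this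
      have := f.injective h h'
      subst this
      rw [h2, h2']
    · exact absurd ⟨x, y, h, Or.inr h1⟩ h'
    · exact absurd ⟨x', y', h', Or.inl h1'⟩ h
    · exact absurd ⟨x', y', h', Or.inr h1'⟩ h
    · rw [← h1, ← h1']
  have Rtot : ∀ a, ∃ b, R a b := by
    intro a
    rcases Classical.em (∃ x y, (x, y) ∈ f.rel ∧ (a = θ (x, false) ∨ a = θ (y, true))) with h | h
    · obtain ⟨x, y, h, h1 | h1⟩ := h
      · exact ⟨_, Or.inl ⟨x, y, h, h1, rfl⟩⟩
      · exact ⟨_, Or.inr (Or.inl ⟨x, y, h, h1, rfl⟩)⟩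
    · exact ⟨a, Or.inr (Or.inr ⟨rfl, h⟩)⟩
  have Rpart : ∀ a b, R a b → ∀ C ∈ Pω, a ∈ C → b ∈ C := by
    have key : ∀ x y, (x, y) ∈ f.rel → ∀ b b', ∀ C ∈ Pω, θ (x, b) ∈ C ↔ θ (y, b') ∈ C := by
      intro x y hxy b b' C hC
      have h1 := hθJ (x, b)
      have h2 := hθJ (y, b')
      have h3 : κ x = κ y := hf x y hxy
      simp only [h3] at h1 h2
      constructor
      · intro h
        rw [hpeq C hC _ (hJ _) _ h h1]
        exact h2
      · intro h
        rw [hpeq C hC _ (hJ _) _ h h2]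
        exact h1
    rintro a b (⟨x, y, h, rfl, rfl⟩ | ⟨x, y, h, rfl, rfl⟩ | ⟨rfl, h⟩) C hC ha
    · exact (key x y h _ _ C hC).1 ha
    · exact (key x y h _ _ C hC).2 ha
    · exact ha
  let σ : Chart X :=
    { rel := {q | R q.1 q.2}
      functional := fun x y y' h h' => Rfun _ _ _ h h'
      injective := fun x x' y h h' => Rfun _ _ _ (Rsymm _ _ h) (Rsymm _ _ h') }
  have hσ : σ ∈ PStab Pω := by
    refine ⟨⟨fun x => Rtot x, fun y => ?_⟩, ?_⟩
    · obtain ⟨x, hx⟩ := Rtot y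
      exact ⟨x, Rsymm _ _ hx⟩
    · intro C hC
      ext y
      constructor
      · rintro ⟨x, hx, h⟩
        exact Rpart x y h C hC hx
      · intro hy
        obtain ⟨x, hx⟩ := Rtot y
        exact ⟨x, Rpart _ _ hx C hC hy, Rsymm _ _ hx⟩
  have hfe : f = u1 * (σ * u2) := by
    apply chart_ext
    intro x y
    simp only [mem_mul]
    constructor
    · intro h
      exact ⟨θ (x, false), rfl, θ (y, true), Or.inl ⟨x, y, h, rfl, rfl⟩, rfl⟩
    · rintro ⟨v, hv, w, h, hw⟩
      change v = θ (x, false) at hv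
      change w = θ (y, true) at hw
      subst hv
      subst hw
      rcases h with (⟨x', y', h, h1, h2⟩ | ⟨x', y', h, h1, h2⟩ | ⟨h1, h⟩)
      · rw [hθ0 _ _ _ h1, hθ0 _ _ _ h2]
        exact h
      · exact absurd h1 (hθ1 _ _)
      · exact absurd h1 (hθ1 _ _)
  have k1 : InGen (PStab Pω ∪ {u1, u2}) u1 := InGen.base (by simp)
  have k2 : InGen (PStab Pω ∪ {u1, u2}) u2 := InGen.base (by simp)
  have k3 : InGen (PStab Pω ∪ {u1, u2}) σ := InGen.base (Or.inl hσ)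
  have := k1.mul (k3.mul k2)
  rw [← hfe] at this
  exact this

theorem path_iter {T : RTree X} {P : Set X} (h : T.IsRootedPath P) {x : X} (hx : x ∈ P) (n : ℕ) :
    T.par^[n] x ∈ P := by
  induction n with
  | zero => exact hx
  | succ n ih =>
    rw [Function.iterate_succ_apply']
    exact h.2.2.1 _ ih

theorem path_root {T : RTree X} (hT : T.verts = Set.univ) {P : Set X} (h : T.IsRootedPath P) :
    T.root ∈ P := by
  obtain ⟨x, hx⟩ := h.1
  rw [← iter_level T hT x]
  exact path_iter h hx _

theorem anc_eq {T : RTree X} (hT : T.verts = Set.univ) {x y : X} (h : T.anc x y)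
    (hl : T.level y ≤ T.level x) : y = x := by
  have h1 := up_of_anc T hT h
  have h2 := anc_level T hT h
  rw [show T.level x = T.level y by omega, up_self] at h1
  exact h1

theorem dichotomy [Countable X] {T : RTree X} (hT : T.verts = Set.univ)
    (Good : Set (Set X) → Prop) (hmono : ∀ A B, A ⊆ B → Good B → Good A)
    (hun : ∀ A : Option X → Set (Set X), (∀ i, Good (A i)) → Good (⋃ i, A i))
    (hbad : ¬ Good {P | T.IsRootedPath P}) :
    ∃ V, SubV T V ∧ ∀ x ∈ V, ¬ Good {P | T.IsRootedPath P ∧ P ⊆ V ∧ x ∈ P} := by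
  classical
  let V : Set X := {x | ¬ Good {P | T.IsRootedPath P ∧ x ∈ P}}
  refine ⟨V, ⟨?_, ?_⟩, ?_⟩
  · intro hg
    refine hbad (hmono _ _ ?_ hg)
    intro P hP
    exact ⟨hP, path_root hT hP⟩
  · intro x hx hg
    refine hx (hmono _ _ ?_ hg)
    rintro P ⟨hP, hxP⟩
    exact ⟨hP, hP.2.2.1 _ hxP⟩
  · intro x hx hg
    refine hx (hmono _ _ ?_ (hun (fun i => i.elim {P | T.IsRootedPath P ∧ P ⊆ V ∧ x ∈ P}
      (fun z => if z ∈ V then {P | T.IsRootedPath P ∧ P ⊆ V ∧ x ∈ P} else {P | T.IsRootedPath P ∧ z ∈ P})) ?_))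
    · rintro P ⟨hP, hxP⟩
      rcases Classical.em (P ⊆ V) with h | h
      · exact mem_iUnion.2 ⟨none, hP, h, hxP⟩
      · obtain ⟨z, hz, hzV⟩ := Set.not_subset.1 h
        refine mem_iUnion.2 ⟨some z, ?_⟩
        simp only [Option.elim, hzV, if_false]
        exact ⟨hP, hz⟩
    · rintro (_ | z)
      · exact hg
      · simp only [Option.elim]
        split_ifs with hz
        · exact hg
        · exact not_not.1 hz

theorem desc_step {T : RTree X} (hT : T.verts = Set.univ) {V : Set X} (h : SubV T V) {x y : X} {n : ℕ}
    (hy : y ∈ V) (hxy : T.anc x y) (hn : T.level y = n + 1) (hx : ¬ n + 1 ≤ T.level x) :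
    T.par y ∈ V ∧ T.anc x (T.par y) ∧ T.level (T.par y) = n ∧ y ∈ ch T V (T.par y) := by
  have l := level_par T hT y
  refine ⟨h.2 _ hy, anc_of_anc_of_le T hT hxy (anc_par T y) (by omega), by omega, hy, rfl, ?_⟩
  intro e
  rw [← e] at l
  omega

theorem desc_finite {T : RTree X} (hT : T.verts = Set.univ) {V : Set X} (h : SubV T V) {x : X}
    (hf : ∀ y ∈ V, T.anc x y → (ch T V y).Finite) (n : ℕ) :
    {y | y ∈ V ∧ T.anc x y ∧ T.level y = n}.Finite := by
  induction n with
  | zero =>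
    refine (finite_singleton x).subset ?_
    rintro y ⟨_, h1, h2⟩
    exact anc_eq hT h1 (by omega)
  | succ n ih =>
    rcases Classical.em (n + 1 ≤ T.level x) with hn | hn
    · refine (finite_singleton x).subset ?_
      rintro y ⟨_, h1, h2⟩
      exact anc_eq hT h1 (by omega)
    · refine (ih.biUnion (t := fun w => ch T V w) (fun w hw => hf w hw.1 hw.2.1)).subset ?_
      rintro y ⟨h0, h1, h2⟩
      obtain ⟨a, b, c, d⟩ := desc_step hT h h0 h1 h2 hn
      exact mem_biUnion (x := T.par y) ⟨a, b, c⟩ d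

theorem desc_sub {T : RTree X} (hT : T.verts = Set.univ) {V : Set X} (h : SubV T V) {x : X}
    (hf : ∀ y ∈ V, T.anc x y → (ch T V y).Subsingleton) (n : ℕ) :
    {y | y ∈ V ∧ T.anc x y ∧ T.level y = n}.Subsingleton := by
  induction n with
  | zero =>
    rintro y ⟨_, h1, h2⟩ y' ⟨_, h1', h2'⟩
    rw [anc_eq hT h1 (by omega), anc_eq hT h1' (by omega)]
  | succ n ih =>
    rintro y ⟨h0, h1, h2⟩ y' ⟨h0', h1', h2'⟩
    rcases Classical.em (n + 1 ≤ T.level x) with hn | hn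
    · rw [anc_eq hT h1 (by omega), anc_eq hT h1' (by omega)]
    · obtain ⟨a, b, c, d⟩ := desc_step hT h h0 h1 h2 hn
      obtain ⟨a', b', c', d'⟩ := desc_step hT h h0' h1' h2' hn
      have e : T.par y = T.par y' := ih ⟨a, b, c⟩ ⟨a', b', c'⟩
      rw [← e] at d'
      exact hf _ a b d d'

def cone (T : RTree X) (V : Set X) (x : X) : Set X := {y | (y ∈ V ∧ T.anc x y) ∨ T.anc y x}

theorem path_cone {T : RTree X} {V P : Set X} {x : X} (h : T.IsRootedPath P) (hV : P ⊆ V)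
    (hx : x ∈ P) : P ⊆ cone T V x := by
  intro y hy
  rcases h.2.2.2 x hx y hy with h1 | h1
  · exact Or.inl ⟨hV hy, h1⟩
  · exact Or.inr h1

theorem cone_finite {T : RTree X} (hT : T.verts = Set.univ) {V : Set X} (h : SubV T V) {x : X}
    (hf : ∀ y ∈ V, T.anc x y → (ch T V y).Finite) (n : ℕ) :
    {y | y ∈ cone T V x ∧ T.level y = n}.Finite := by
  refine ((desc_finite hT h hf n).union (finite_singleton (up T x n))).subset ?_
  rintro y ⟨⟨h1, h2⟩ | h1, h3⟩
  · exact Or.inl ⟨h1, h2, h3⟩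
  · right
    rw [← h3]
    exact (up_of_anc T hT h1).symm

theorem cone_sub {T : RTree X} (hT : T.verts = Set.univ) {V : Set X} (h : SubV T V) {x : X}
    (hf : ∀ y ∈ V, T.anc x y → (ch T V y).Subsingleton) {y y' : X} (hy : y ∈ cone T V x)
    (hy' : y' ∈ cone T V x) (e : T.level y = T.level y') : y = y' := by
  rcases hy with ⟨h1, h2⟩ | h1 <;> rcases hy' with ⟨h1', h2'⟩ | h1'
  · exact desc_sub hT h hf _ ⟨h1, h2, e⟩ ⟨h1', h2', rfl⟩
  · have l1 := anc_level T hT h2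
    have l2 := anc_level T hT h1'
    rw [anc_eq hT h2 (by omega)]
    exact anc_eq hT h1' (by omega)
  · have l1 := anc_level T hT h2'
    have l2 := anc_level T hT h1
    rw [anc_eq hT h2' (by omega)]
    exact (anc_eq hT h1 (by omega)).symm
  · rw [← up_of_anc T hT h1, ← up_of_anc T hT h1', e]

def Cov (T : RTree X) (A : Set (Set X)) : Prop :=
  ∃ F : Set (Set X), F.Countable ∧ (∀ G ∈ F, ∀ n, {y | y ∈ G ∧ T.level y = n}.Finite) ∧
    ∀ P ∈ A, ∃ G ∈ F, P ⊆ G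

theorem covB [Countable X] {T : RTree X} (hT : T.verts = Set.univ)
    (hno : ¬ ∃ T' : RTree X, IsSubtree T' T ∧
        ∀ x ∈ T'.verts, ∃ y ∈ T'.verts, T'.anc x y ∧ (T'.nbhd y).Infinite) :
    Cov T {P | T.IsRootedPath P} := by
  by_contra hbad
  have hm : ∀ A B, A ⊆ B → Cov T B → Cov T A := by
    rintro A B hAB ⟨F, h1, h2, h3⟩
    exact ⟨F, h1, h2, fun P hP => h3 P (hAB hP)⟩
  have hu : ∀ A : Option X → Set (Set X), (∀ i, Cov T (A i)) → Cov T (⋃ i, A i) := by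
    intro A hA
    choose F h1 h2 h3 using hA
    refine ⟨⋃ i, F i, countable_iUnion h1, ?_, ?_⟩
    · intro G hG
      obtain ⟨i, hi⟩ := mem_iUnion.1 hG
      exact h2 i G hi
    · intro P hP
      obtain ⟨i, hi⟩ := mem_iUnion.1 hP
      obtain ⟨G, hG, hPG⟩ := h3 i P hi
      exact ⟨G, mem_iUnion.2 ⟨i, hG⟩, hPG⟩
  obtain ⟨V, hV, hx⟩ := dichotomy hT (Cov T) hm hu hbad
  · refine hno ⟨mkSub T hT V hV, mkSub_subtree T hT V hV, ?_⟩
    intro x hxV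
    by_contra hcon
    refine hx x hxV ⟨{cone T V x}, by simp, ?_, ?_⟩
    · rintro G rfl n
      refine cone_finite hT hV ?_ n
      intro y hy hxy
      by_contra hinf
      refine hcon ⟨y, hy, hxy, ?_⟩
      exact Set.Infinite.mono (mkSub_ch T hT V hV y) hinf
    · rintro P ⟨h1, h2, h3⟩
      exact ⟨_, rfl, path_cone h1 h2 h3⟩

theorem upperB [Countable X] {T : RTree X} (hT : T.verts = Set.univ)
    (Pω : Set (Set X)) (hpart : Setoid.IsPartition Pω)
    (hfin : ∀ B ∈ Pω, B.Finite) (hunb : ∀ n : ℕ, ∃ B ∈ Pω, n ≤ B.ncard)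
    (hno : ¬ ∃ T' : RTree X, IsSubtree T' T ∧
        ∀ x ∈ T'.verts, ∃ y ∈ T'.verts, T'.anc x y ∧ (T'.nbhd y).Infinite) :
    BSleq (pathSg T) (PStab Pω) := by
  classical
  obtain ⟨F, hF, hlev, hcov⟩ := covB hT hno
  obtain ⟨ε, hε⟩ := Countable.exists_injective_nat X
  have : Countable F := hF.to_subtype
  have key : BSleq (⋃ i : F × F, {f : Chart X | f.dom ⊆ i.1.1 ∧ f.ran ⊆ i.2.1 ∧
      ∀ x y : X, (x, y) ∈ f.rel → T.level y = T.level x}) (PStab Pω) := by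
    refine bs_iUnion ?_
    rintro ⟨⟨G, hG⟩, ⟨H, hH⟩⟩
    let κ : X → ℕ := fun x => if x ∈ G ∪ H then 2 * T.level x else 2 * ε x + 1
    refine bs_trans (bs_of_subset ?_) (upper_local Pω hpart hfin hunb κ ?_)
    · rintro f ⟨h1, h2, h3⟩ x y hxy
      have hx : x ∈ G ∪ H := Or.inl (h1 ⟨y, hxy⟩)
      have hy : y ∈ G ∪ H := Or.inr (h2 ⟨x, hxy⟩)
      simp only [κ, if_pos hx, if_pos hy, h3 x y hxy]
    · intro n
      have he : {x | ε x = n / 2}.Finite :=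
        Set.Subsingleton.finite (fun x hx y hy => hε (Eq.trans hx (Eq.symm hy)))
      refine (((hlev G hG (n / 2)).union (hlev H hH (n / 2))).union he).subset ?_
      intro x hx
      simp only [κ, Set.mem_ofPred_eq] at hx
      split_ifs at hx with hm
      · left
        rcases hm with hm | hm
        · exact Or.inl ⟨hm, by omega⟩
        · exact Or.inr ⟨hm, by omega⟩
      · right
        show ε x = n / 2
        omega
  refine bs_trans (bs_of_subset ?_) key
  rintro f ⟨⟨P, hP, h1⟩, ⟨Q, hQ, h2⟩, h3⟩
  obtain ⟨G, hG, hPG⟩ := hcov P hP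
  obtain ⟨H, hH, hQH⟩ := hcov Q hQ
  refine mem_iUnion.2 ⟨(⟨G, hG⟩, ⟨H, hH⟩), ?_, ?_, h3⟩
  · rw [h1]
    exact hPG
  · rw [h2]
    exact hQH

theorem countC [Countable X] {T : RTree X} (hT : T.verts = Set.univ)
    (hno : ¬ ∃ T' : RTree X, IsSubtree T' T ∧
        ∀ x ∈ T'.verts, ∃ y ∈ T'.verts, T'.anc x y ∧ 3 ≤ #↥(T'.nbhd y)) :
    {P | T.IsRootedPath P}.Countable := by
  by_contra hbad
  obtain ⟨V, hV, hx⟩ := dichotomy hT Set.Countable (fun A B h hB => hB.mono h)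
    (fun A h => countable_iUnion h) hbad
  refine hno (perf_subtree hT hV ?_)
  intro x hxV
  by_contra hcon
  have hsub : ∀ y ∈ V, T.anc x y → (ch T V y).Subsingleton := by
    intro y hy hxy
    by_contra hn
    exact hcon ⟨y, hy, hxy, Set.not_subsingleton_iff.1 hn⟩
  refine hx x hxV (((Set.countable_ofPred_finite_subset (s := (Set.univ : Set X))
      (Set.to_countable _)).union (countable_singleton (cone T V x))).mono ?_)
  rintro P ⟨h1, h2, h3⟩
  have hPc := path_cone h1 h2 h3
  rcases Classical.em P.Finite with hfin | hinf
  · exact Or.inl ⟨hfin, subset_univ _⟩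
  · right
    refine Subset.antisymm hPc ?_
    intro y hy
    have : ∃ p ∈ P, T.level y ≤ T.level p := by
      by_contra hne
      refine hinf (((Set.finite_Iio (T.level y)).biUnion
        (t := fun n => {w | w ∈ cone T V x ∧ T.level w = n})
        (fun n _ => cone_finite hT hV (fun y hy hxy => (hsub y hy hxy).finite) n)).subset ?_)
      intro p hp
      refine mem_biUnion (x := T.level p) ?_ ⟨hPc hp, rfl⟩
      by_contra hlt
      exact hne ⟨p, hp, not_lt.1 hlt⟩
    obtain ⟨p, hp, hl⟩ := this
    have hu : up T p (T.level y) ∈ P := path_iter h1 hp _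
    rw [cone_sub hT hV hsub hy (hPc hu) (level_up T hT hl).symm]
    exact hu

theorem upperC {T : RTree X} (hT : T.verts = Set.univ)
    (hc : {P | T.IsRootedPath P}.Countable) : (pathSg T).Countable := by
  have hinj : Set.InjOn (fun f : Chart X => (f.dom, f.ran)) (pathSg T) := by
    have key : ∀ f ∈ pathSg T, ∀ g ∈ pathSg T, f.dom = g.dom → f.ran = g.ran →
        ∀ x y, (x, y) ∈ f.rel → (x, y) ∈ g.rel := by
      rintro f ⟨_, _, hf⟩ g ⟨_, ⟨Q, hQ, hgQ⟩, hg⟩ h1 h2 x y hxy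
      have hx : x ∈ g.dom := by
        rw [← h1]
        exact ⟨y, hxy⟩
      obtain ⟨y', hy'⟩ := hx
      have m1 : y ∈ Q := by
        rw [← hgQ, ← h2]
        exact ⟨x, hxy⟩
      have m2 : y' ∈ Q := by
        rw [← hgQ]
        exact ⟨x, hy'⟩
      have l1 := hf _ _ hxy
      have l2 := hg _ _ hy'
      rcases hQ.2.2.2 y m1 y' m2 with h | h
      · rwa [anc_eq hT h (by omega)] at hy'
      · rwa [anc_eq hT h (by omega)]
    intro f hf g hg h
    have h1 : f.dom = g.dom := congrArg Prod.fst h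
    have h2 : f.ran = g.ran := congrArg Prod.snd h
    exact chart_ext fun x y => ⟨key f hf g hg h1 h2 x y, key g hg f hf h1.symm h2.symm x y⟩
  refine Set.MapsTo.countable_of_injOn (t := {P | T.IsRootedPath P} ×ˢ {P | T.IsRootedPath P})
    ?_ hinj (hc.prod hc)
  rintro f ⟨⟨P, hP, h1⟩, ⟨Q, hQ, h2⟩, h3⟩
  refine ⟨?_, ?_⟩
  · simp only [h1]
    exact hP
  · simp only [h2]
    exact hQ

theorem main [Countable X] [Infinite X] (T : RTree X)
    (hT : T.verts = Set.univ)
    (Pω : Set (Set X)) (hpart : Setoid.IsPartition Pω)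
    (hfin : ∀ B ∈ Pω, B.Finite) (hunb : ∀ n : ℕ, ∃ B ∈ Pω, n ≤ B.ncard) :
    ((∃ T' : RTree X, IsSubtree T' T ∧
        ∀ x ∈ T'.verts, ∃ y ∈ T'.verts, T'.anc x y ∧ (T'.nbhd y).Infinite) ∧
      BSequiv (pathSg T) (Set.univ : Set (Chart X))) ∨
    ((¬ ∃ T' : RTree X, IsSubtree T' T ∧
        ∀ x ∈ T'.verts, ∃ y ∈ T'.verts, T'.anc x y ∧ (T'.nbhd y).Infinite) ∧
      (∃ T' : RTree X, IsSubtree T' T ∧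
        ∀ x ∈ T'.verts, ∃ y ∈ T'.verts, T'.anc x y ∧ 3 ≤ #↥(T'.nbhd y)) ∧
      BSequiv (pathSg T) (PStab Pω)) ∨
    ({P : Set X | T.IsRootedPath P}.Countable ∧
      BSequiv (pathSg T) (∅ : Set (Chart X))) := by
  rcases Classical.em (∃ T' : RTree X, IsSubtree T' T ∧
        ∀ x ∈ T'.verts, ∃ y ∈ T'.verts, T'.anc x y ∧ (T'.nbhd y).Infinite) with h1 | h1
  · refine Or.inl ⟨h1, bs_of_subset (subset_univ _), ?_⟩
    obtain ⟨T', hs, h⟩ := h1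
    refine lowerA hT (subV_of_subtree hs) ?_
    intro x hx
    obtain ⟨y, hy, hxy, hi⟩ := h x hx
    exact ⟨y, hy, subtree_anc hs hy hxy, ch_infinite hs hi⟩
  · right
    rcases Classical.em (∃ T' : RTree X, IsSubtree T' T ∧
        ∀ x ∈ T'.verts, ∃ y ∈ T'.verts, T'.anc x y ∧ 3 ≤ #↥(T'.nbhd y)) with h2 | h2
    · refine Or.inl ⟨h1, h2, upperB hT Pω hpart hfin hunb h1, ?_⟩
      obtain ⟨T', hs, h⟩ := h2
      refine lowerB hT (subV_of_subtree hs) ?_ Pω hpart hfin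
      intro x hx
      obtain ⟨y, hy, hxy, hi⟩ := h x hx
      exact ⟨y, hy, subtree_anc hs hy hxy, ch_nontrivial hs hi⟩
    · right
      have hc := countC hT h2
      refine ⟨hc, ⟨pathSg T, upperC hT hc, ?_⟩, bs_of_subset (empty_subset _)⟩
      intro f hf
      exact InGen.base (Or.inr hf)

end BSP

/-- trichotomy for rooted trees: for any rooted tree `T` on a
countably infinite vertex set `X`, either (i) `T` contains a subtree in which
every vertex has a descendant of infinite degree and `𝒮(T) ≈ I_X`; or (ii) `T`
contains no such subtree but contains a subtree in which every vertex has a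
descendant of degree at least 3, and `𝒮(T) ≈ PStab 𝒫_ω`; or (iii) the set of
rooted paths of `T` is countable and `𝒮(T) ≈ ∅`. -/
theorem stmt16 {X : Type u} [Countable X] [Infinite X] (T : RTree X)
    (hT : T.verts = Set.univ)
    (Pω : Set (Set X)) (hpart : Setoid.IsPartition Pω)
    (hfin : ∀ B ∈ Pω, B.Finite) (hunb : ∀ n : ℕ, ∃ B ∈ Pω, n ≤ B.ncard) :
    ((∃ T' : RTree X, IsSubtree T' T ∧
        ∀ x ∈ T'.verts, ∃ y ∈ T'.verts, T'.anc x y ∧ (T'.nbhd y).Infinite) ∧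
      BSequiv (pathSg T) (Set.univ : Set (Chart X))) ∨
    ((¬ ∃ T' : RTree X, IsSubtree T' T ∧
        ∀ x ∈ T'.verts, ∃ y ∈ T'.verts, T'.anc x y ∧ (T'.nbhd y).Infinite) ∧
      (∃ T' : RTree X, IsSubtree T' T ∧
        ∀ x ∈ T'.verts, ∃ y ∈ T'.verts, T'.anc x y ∧ 3 ≤ #↥(T'.nbhd y)) ∧
      BSequiv (pathSg T) (PStab Pω)) ∨
    ({P : Set X | T.IsRootedPath P}.Countable ∧
      BSequiv (pathSg T) (∅ : Set (Chart X))) := by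
  exact BSP.main T hT Pω hpart hfin hunb
end

section
/- Let X be a set, κ an infinite cardinal, and S a subsemigroup of I_X. Write S⁻¹ = {f⁻¹ : f ∈ S}. Then exactly one of the following holds: (i) S ≈_κ S⁻¹ ≈_κ ⟨S ∪ S⁻¹⟩ (the subsemigroup generated by S ∪ S⁻¹); (ii) S and S⁻¹ are incomparable under ≼_κ (neither S ≼_κ S⁻¹ nor S⁻¹ ≼_κ S), and neither S nor S⁻¹ is ≈_κ-equivalent to any inverse subsemigroup of I_X. -/
open Set Cardinal

universe u

theorem Sgen_sub_of {X : Type u} {A B : Set (Chart X)} (h : A ⊆ Sgen B) : Sgen A ⊆ Sgen B := by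
  intro f hf
  induction hf with
  | base hf => exact h hf
  | mul _ _ h1 h2 => exact InGen.mul h1 h2

theorem sub_Sgen_self {X : Type u} (A : Set (Chart X)) : A ⊆ Sgen A := fun _ h => InGen.base h

theorem Chart_inv_mul_rev {X : Type u} (f g : Chart X) : (f * g)⁻¹ = g⁻¹ * f⁻¹ := by
  have h : ((f * g)⁻¹).rel = (g⁻¹ * f⁻¹).rel := by
    ext ⟨x, y⟩
    constructor
    · rintro ⟨z, h1, h2⟩
      exact ⟨z, h2, h1⟩
    · rintro ⟨z, h1, h2⟩
      exact ⟨z, h2, h1⟩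
  cases h1 : (f * g)⁻¹
  cases h2 : g⁻¹ * f⁻¹
  rw [h1, h2] at h
  simpa using h

theorem Chart_inv_inv {X : Type u} (f : Chart X) : (f⁻¹)⁻¹ = f := rfl

theorem inv_image_image {X : Type u} (S : Set (Chart X)) :
    Inv.inv '' (Inv.inv '' S) = S := by
  ext f
  constructor
  · rintro ⟨_, ⟨g, hg, rfl⟩, rfl⟩
    exact hg
  · intro h
    exact ⟨f⁻¹, ⟨f, h, rfl⟩, rfl⟩

theorem BSleqC_trans {X : Type u} {κ : Cardinal.{u}} (hκ : ℵ₀ ≤ κ) {A B C : Set (Chart X)}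
    (h1 : BSleqC κ A B) (h2 : BSleqC κ B C) : BSleqC κ A C := by
  obtain ⟨U, hU, hA⟩ := h1
  obtain ⟨V, hV, hB⟩ := h2
  refine ⟨V ∪ U, (mk_union_le V U).trans_lt (add_lt_of_lt hκ hV hU), hA.trans (Sgen_sub_of ?_)⟩
  refine union_subset (hB.trans (Sgen_sub_of ?_)) ?_
  · exact (union_subset_union_right C subset_union_left).trans (sub_Sgen_self _)
  · exact (subset_union_right.trans subset_union_right).trans (sub_Sgen_self _)

theorem InGen_inv {X : Type u} {A : Set (Chart X)} {f : Chart X} (h : InGen A f) :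
    InGen (Inv.inv '' A) f⁻¹ := by
  induction h with
  | base hf => exact InGen.base ⟨_, hf, rfl⟩
  | mul _ _ h1 h2 =>
    rw [Chart_inv_mul_rev]
    exact InGen.mul h2 h1

theorem BSleqC_inv {X : Type u} {κ : Cardinal.{u}} {A B : Set (Chart X)}
    (h : BSleqC κ A B) : BSleqC κ (Inv.inv '' A) (Inv.inv '' B) := by
  obtain ⟨U, hU, hA⟩ := h
  refine ⟨Inv.inv '' U, mk_image_le.trans_lt hU, ?_⟩
  rw [← image_union]
  rintro _ ⟨f, hf, rfl⟩
  exact InGen_inv (hA hf)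

theorem BSleqC_of_sub {X : Type u} {κ : Cardinal.{u}} (hκ : ℵ₀ ≤ κ) {A B : Set (Chart X)}
    (h : A ⊆ Sgen B) : BSleqC κ A B := by
  refine ⟨∅, ?_, by simpa using h⟩
  rw [mk_eq_zero]
  exact aleph0_pos.trans_le hκ

/-- for any infinite cardinal `κ` and any subsemigroup `S` of
`I_X`, exactly one of the following holds: (i) `S ≈_κ S⁻¹ ≈_κ ⟨S ∪ S⁻¹⟩`;
(ii) `S` and `S⁻¹` are `≼_κ`-incomparable and neither is `≈_κ`-equivalent to
any inverse subsemigroup of `I_X`. -/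
theorem stmt17 {X : Type u} (κ : Cardinal.{u}) (hκ : ℵ₀ ≤ κ)
    (S : Set (Chart X)) (hS : IsSubsemigroup S) :
    Xor'
      (BSequivC κ S (Inv.inv '' S) ∧
        BSequivC κ (Inv.inv '' S) (Sgen (S ∪ Inv.inv '' S)))
      ((¬ BSleqC κ S (Inv.inv '' S) ∧ ¬ BSleqC κ (Inv.inv '' S) S) ∧
        ∀ M : Set (Chart X), IsInverseSubsemigroup M →
          ¬ BSequivC κ S M ∧ ¬ BSequivC κ (Inv.inv '' S) M) := by
  have key : BSleqC κ S (Inv.inv '' S) ↔ BSleqC κ (Inv.inv '' S) S := by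
    constructor
    · intro h
      simpa only [inv_image_image] using BSleqC_inv h
    · intro h
      simpa only [inv_image_image] using BSleqC_inv h
  by_cases h : BSleqC κ S (Inv.inv '' S)
  · refine Or.inl ⟨⟨⟨h, key.1 h⟩, ?_, ?_⟩, fun h' => h'.1.1 h⟩
    · exact BSleqC_of_sub hκ ((subset_union_right.trans (sub_Sgen_self _)).trans (sub_Sgen_self _))
    · obtain ⟨U, hU, hA⟩ := h
      exact ⟨U, hU, Sgen_sub_of (union_subset hA (subset_union_left.trans (sub_Sgen_self _)))⟩
  · refine Or.inr ⟨⟨⟨h, fun h' => h (key.2 h')⟩, fun M hM => ?_⟩, fun h' => h h'.1.1⟩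
    have hMi : Inv.inv '' M = M := by
      apply Subset.antisymm
      · rintro _ ⟨f, hf, rfl⟩
        exact hM.2 f hf
      · intro f hf
        exact ⟨f⁻¹, hM.2 f hf, rfl⟩
    constructor
    · rintro ⟨h1, h2⟩
      have h3 := BSleqC_inv h1
      rw [hMi] at h3
      exact h (key.2 (BSleqC_trans hκ h3 h2))
    · rintro ⟨h1, h2⟩
      have h3 := BSleqC_inv h1
      rw [hMi, inv_image_image] at h3
      exact h (BSleqC_trans hκ h3 h2)
end
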